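/- For every prime p, every integer N ≥ 2, every integer v ∈ ℤ, and every nonempty subset I ⊆ [N], the integral 𝒵_I(p^v ℤ_p, s) converges absolutely if and only if s ∈ Ω_I, and in this case 𝒵_I(p^v ℤ_p, s) = (1 / p^{(v−1)(e_I(s)+1) + #I}) · Σ_{𝔖 ∈ ℛ_I} ∏_{λ ∈ ℬ(𝔖)} (p−1)_{deg_𝔖(λ)−1} / (p^{e_λ(s)} − 1). In particular, taking I = [N] and v = 0 gives: 𝒵_N(ℤ_p, s) converges absolutely if and only if s ∈ Ω_N, and then 𝒵_N(ℤ_p, s) = p^{Σ_{i<j} s_{ij}} · Σ_{𝔖 ∈ ℛ_N} ∏_{λ ∈ ℬ(𝔖)} (p−1)_{deg_𝔖(λ)−1} / (p^{e_λ(s)} − 1). -/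

import Mathlib

open MeasureTheory
open scoped LinearAlgebra.Projectivization

namespace LogCoulomb

noncomputable section

/-! ### The projective line over `ℚ_p`, its spherical metric and `PGL₂`-invariant measure -/

variable (p : ℕ) [Fact p.Prime]

instance : MeasurableSpace ℚ_[p] := borel _
instance : BorelSpace ℚ_[p] := ⟨rfl⟩

/-- The projective line over `ℚ_p`. -/
abbrev P1 := ℙ ℚ_[p] (Fin 2 → ℚ_[p])

instance : TopologicalSpace (P1 p) :=
  inferInstanceAs (TopologicalSpace (Quotient _))

instance : MeasurableSpace (P1 p) := borel _
instance : BorelSpace (P1 p) := ⟨rfl⟩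

/-- Spherical distance on homogeneous coordinates:
`δ((x₀,x₁),(y₀,y₁)) = |x₀y₁ - x₁y₀| / (max(|x₀|,|x₁|) ⬝ max(|y₀|,|y₁|))`. -/
def sdelta (x y : Fin 2 → ℚ_[p]) : ℝ :=
  ‖x 0 * y 1 - x 1 * y 0‖ / (max ‖x 0‖ ‖x 1‖ * max ‖y 0‖ ‖y 1‖)

/-- The spherical metric on `ℙ¹(ℚ_p)`, defined via the canonical representatives. -/
def pdelta (ξ η : P1 p) : ℝ := sdelta p ξ.rep η.rep

open Classical in
/-- The action of a matrix on `ℙ¹(ℚ_p)`: `[x₀:x₁] ↦ [a x₀ + b x₁ : c x₀ + d x₁]`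
(well-defined, and given by the first branch of the `if`, whenever `A` is invertible). -/
def mobius (A : Matrix (Fin 2) (Fin 2) ℚ_[p]) (ξ : P1 p) : P1 p :=
  if h : A.mulVec ξ.rep ≠ 0 then Projectivization.mk ℚ_[p] (A.mulVec ξ.rep) h else ξ

/-- `ν` is invariant under the action of `GL₂(ℤ_p)` on `ℙ¹(ℚ_p)`; membership of the matrix
entries in `ℤ_p`, and invertibility of the matrix over `ℤ_p`, are phrased via the `p`-adic
norm on `ℚ_p`. -/
def IsGLInvariant (ν : Measure (P1 p)) : Prop :=
  ∀ A : Matrix (Fin 2) (Fin 2) ℚ_[p],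
    (∀ i j, ‖A i j‖ ≤ 1) → ‖A.det‖ = 1 →
      ∀ M : Set (P1 p), MeasurableSet M → ν (mobius p A '' M) = ν M

/-- The embedding `ι : ℚ_p → ℙ¹(ℚ_p)`, `x ↦ [x : 1]`. -/
def iota (x : ℚ_[p]) : P1 p :=
  Projectivization.mk ℚ_[p] ![x, 1] (by
    intro h
    have h1 := congrFun h 1
    simp at h1)

/-! ### Canonical partition functions -/

/-- The pairs `(i,j)` with `i < j`. -/
def pairs (N : ℕ) : Finset (Fin N × Fin N) := Finset.univ.filter fun q => q.1 < q.2

/-- The closed unit ball `ℤ_p = R` inside `ℚ_p`. -/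
def Zball : Set ℚ_[p] := {x | ‖x‖ ≤ 1}

/-- The open unit ball `pℤ_p = P` inside `ℚ_p`. -/
def Pball : Set ℚ_[p] := {x | ‖x‖ < 1}

/-- The one-component canonical partition function
`Z_N(X, β) = ∫_{X^N} ∏_{i<j} |x_i - x_j|^β dμ^N` (as a Bochner integral, whether or not it
converges absolutely). -/
def ZN (μ : Measure ℚ_[p]) [SigmaFinite μ] (X : Set ℚ_[p]) (N : ℕ) (β : ℂ) : ℂ :=
  ∫ x : Fin N → ℚ_[p], ∏ q ∈ pairs N, (‖x q.1 - x q.2‖ : ℂ) ^ β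
    ∂(Measure.pi fun _ => μ.restrict X)

/-- The multivariate canonical partition function
`𝒵_I(X, s) = ∫_{X^I} ∏_{i<j, i,j ∈ I} |x_i - x_j|^{s_{ij}} dμ^I` for a subset `I ⊆ [N]`. -/
def ZI (μ : Measure ℚ_[p]) [SigmaFinite μ] (X : Set ℚ_[p]) {N : ℕ} (I : Finset (Fin N))
    (s : Fin N → Fin N → ℂ) : ℂ :=
  ∫ x : I → ℚ_[p],
    ∏ q ∈ Finset.univ.filter (fun q : (↥I) × (↥I) => (q.1 : Fin N) < (q.2 : Fin N)),
      (‖x q.1 - x q.2‖ : ℂ) ^ s q.1.1 q.2.1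
    ∂(Measure.pi fun _ => μ.restrict X)

/-- The multivariate canonical partition function
`𝒵_N(ℙ¹(ℚ_p), s) = ∫_{(ℙ¹(ℚ_p))^N} ∏_{i<j} δ(ξ_i,ξ_j)^{s_{ij}} dν^N`. -/
def ZP1s (ν : Measure (P1 p)) [SigmaFinite ν] (N : ℕ) (s : Fin N → Fin N → ℂ) : ℂ :=
  ∫ x : Fin N → P1 p, ∏ q ∈ pairs N, ((pdelta p (x q.1) (x q.2) : ℝ) : ℂ) ^ s q.1 q.2
    ∂(Measure.pi fun _ => ν)

/-- The one-component canonical partition function `Z_N(ℙ¹(ℚ_p), β)`. -/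
def ZP1 (ν : Measure (P1 p)) [SigmaFinite ν] (N : ℕ) (β : ℂ) : ℂ :=
  ∫ x : Fin N → P1 p, ∏ q ∈ pairs N, ((pdelta p (x q.1) (x q.2) : ℝ) : ℂ) ^ β
    ∂(Measure.pi fun _ => ν)

/-! ### The quadratic recurrence -/

/-- The factor `ρ_{N,k}(t,β)` appearing in the quadratic recurrence; here
`N.choose 2 = N(N-1)/2`. -/
def rho (N k : ℕ) (t : ℝ) (β : ℂ) : ℂ :=
  if t = 0 then
    (((N : ℂ) + (N.choose 2 : ℂ) * β) * (1 - 2 * (k : ℂ) / (N : ℂ)) + 1) /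
      (((N : ℂ) + (N.choose 2 : ℂ) * β) - 1)
  else
    Complex.sinh (((t : ℂ) / 2) * (((N : ℂ) + (N.choose 2 : ℂ) * β) * (1 - 2 * (k : ℂ) / (N : ℂ)) + 1)) /
      Complex.sinh (((t : ℂ) / 2) * (((N : ℂ) + (N.choose 2 : ℂ) * β) - 1))

/-- The quadratic recurrence: `F 0 = F 1 = 1` and
`F N t β = ∑_{k=1}^{N-1} (k/N) ρ_{N,k}(t,β) F_{N-k}(t,β) F_k(t,β)` for `N ≥ 2`. -/
def F : ℕ → ℝ → ℂ → ℂ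
  | 0, _, _ => 1
  | 1, _, _ => 1
  | N + 2, t, β =>
    ∑ k ∈ (Finset.Icc 1 (N + 1)).attach,
      (((k : ℕ) : ℂ) / ((N : ℂ) + 2)) * rho (N + 2) k t β *
        F (N + 2 - (k : ℕ)) t β * F (k : ℕ) t β
  decreasing_by
  all_goals
    have hk := Finset.mem_Icc.mp k.2
    omega

/-! ### Splitting chains -/

/-- A splitting chain `Λ_0 > Λ_1 > ⋯ > Λ_L` of set partitions of the subset `I ⊆ [N]`,
beginning with the trivial partition `{I}` and ending with the partition of `I` into
singletons.  (The values `Λ ℓ` for `ℓ > L` are required to be `∅`, so that a chain is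
determined by the genuine data `Λ_0, …, Λ_L`.) -/
structure SplChain (N : ℕ) (I : Finset (Fin N)) where
  L : ℕ
  Λ : ℕ → Finset (Finset (Fin N))
  nonempty_mem : ∀ ℓ ≤ L, ∀ B ∈ Λ ℓ, B.Nonempty
  subset_mem : ∀ ℓ ≤ L, ∀ B ∈ Λ ℓ, B ⊆ I
  cover : ∀ ℓ ≤ L, ∀ i ∈ I, ∃! B, B ∈ Λ ℓ ∧ i ∈ B
  first : Λ 0 = {I}
  last : Λ L = I.image fun i => {i}
  refines : ∀ ℓ < L, ∀ B ∈ Λ (ℓ + 1), ∃ C ∈ Λ ℓ, B ⊆ C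
  strict : ∀ ℓ < L, Λ (ℓ + 1) ≠ Λ ℓ
  trailing : ∀ ℓ, L < ℓ → Λ ℓ = ∅

variable {N : ℕ} {I : Finset (Fin N)}

/-- The branches of a splitting chain: the non-singleton parts,
`ℬ(𝔖) = (Λ_0 ∪ ⋯ ∪ Λ_{L-1}) \ Λ_L`. -/
def SplChain.branches (S : SplChain N I) : Finset (Finset (Fin N)) :=
  ((Finset.range S.L).biUnion S.Λ) \ S.Λ S.L

/-- The depth `ℓ_𝔖(λ) = max {ℓ : λ ∈ Λ_ℓ}` of a branch. -/
def SplChain.depth (S : SplChain N I) (lam : Finset (Fin N)) : ℕ :=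
  ((Finset.range (S.L + 1)).filter fun ℓ => lam ∈ S.Λ ℓ).sup id

/-- The degree `deg_𝔖(λ) = #{λ' ∈ Λ_{ℓ_𝔖(λ)+1} : λ' ⊆ λ}` of a branch. -/
def SplChain.degree (S : SplChain N I) (lam : Finset (Fin N)) : ℕ :=
  ((S.Λ (S.depth lam + 1)).filter fun lam' => lam' ⊆ lam).card

/-- A splitting chain is reduced if every branch appears in exactly one partition of the
chain (namely the one at its depth). -/
def SplChain.Reduced (S : SplChain N I) : Prop :=
  ∀ lam ∈ S.branches, ∀ ℓ ≤ S.L, (lam ∈ S.Λ ℓ ↔ ℓ = S.depth lam)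

/-- `e_λ(s) = #λ - 1 + ∑_{i<j, i,j ∈ λ} s_{ij}`. -/
def eexp (lam : Finset (Fin N)) (s : Fin N → Fin N → ℂ) : ℂ :=
  (lam.card : ℂ) - 1 + ∑ q ∈ (pairs N).filter fun q => q.1 ∈ lam ∧ q.2 ∈ lam, s q.1 q.2

/-- Membership in `Ω_I`: `Re e_λ(s) > 0` for every `λ ⊆ I` with `#λ > 1`. -/
def InOmega (I : Finset (Fin N)) (s : Fin N → Fin N → ℂ) : Prop :=
  ∀ lam ⊆ I, 1 < lam.card → 0 < (eexp lam s).re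


/-- The multivariate canonical partition function `𝒵_N(ℤ_p, s)` over `Fin N`-indexed tuples. -/
def ZNs (μ : Measure ℚ_[p]) [SigmaFinite μ] (X : Set ℚ_[p]) (N : ℕ)
    (s : Fin N → Fin N → ℂ) : ℂ :=
  ∫ x : Fin N → ℚ_[p], ∏ q ∈ pairs N, (‖x q.1 - x q.2‖ : ℂ) ^ s q.1 q.2
    ∂(Measure.pi fun _ => μ.restrict X)

/-- The ball `p^v ℤ_p = {x : |x| ≤ p^{-v}}` in `ℚ_p`. -/
def pvball (v : ℤ) : Set ℚ_[p] := {x | ‖x‖ ≤ (p : ℝ) ^ (-v)}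

/-- `G_N(q,β) = N! q^{(1/2)(N choose 2)β} F_N(log q, β)`. -/
def GN (N : ℕ) (β : ℂ) (q : ℝ) : ℂ :=
  (N.factorial : ℂ) * (q : ℂ) ^ ((N.choose 2 : ℂ) * β / 2) * F N (Real.log q) β

/-- `H_N(q,β)`, the efficient formula for `Z_N(ℙ¹(K),β)` as a function of `q`. -/
def HN (N : ℕ) (β : ℂ) (q : ℝ) : ℂ :=
  (N.factorial : ℂ) * ∑ k ∈ Finset.range (N + 1),
    Complex.cosh (((Real.log q : ℂ) / 2) * ((N : ℂ) + (N.choose 2 : ℂ) * β) *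
          (1 - 2 * (k : ℂ) / (N : ℂ))) /
        (2 * Complex.cosh ((Real.log q : ℂ) / 2)) ^ N *
      F (N - k) (Real.log q) β * F k (Real.log q) β

end

/-!
For a point of `ℤ_p` distributed according to Haar measure, the first digit is uniform and
independent of the remaining digits, which are again Haar distributed. Points with different first
digits are at distance `1`, so the integrand factors over the residue classes, and each factor is
homogeneous under multiplication by `p`.

Singling out the configurations in which all points of `I` share their first digit exhibits the
absolute integral as a nonzero multiple of a geometric series of ratio `p ^ (-Re e_I)`, the multiple
being finite exactly when the absolute integrals over all proper subsets of `I` are; this yields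
`Ω_I`. For the integrals `W_I` over `(p ℤ_p)^I`, normalised to total mass one, it gives
`(p ^ e_I - 1) W_I = ∑ (p - 1)_{#P - 1} ∏_{B ∈ P} W_B`, summed over the partitions `P ≠ {I}` of `I`.
Applying this identity simultaneously to all non-singleton parts of a partition is one step of a
reduced splitting chain, so iterating it down to singletons produces the sum over `ℛ_I`.
-/

section Fibres

variable {ι κ : Type*} [DecidableEq ι] [DecidableEq κ]

/-- The partition of `I` into the nonempty fibres of the restriction of `f` to `I`. -/
def fibrePartition (f : ι → κ) (I : Finset ι) : Finpartition I :=
  Finpartition.ofSetSetoid (Setoid.ker f) I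

lemma parts_eq_image_part {I : Finset ι} (P : Finpartition I) : P.parts = I.image P.part := by
  ext B
  refine ⟨fun hB => ?_, fun hB => ?_⟩
  · obtain ⟨i, hi, rfl⟩ := P.part_surjOn hB
    exact Finset.mem_image_of_mem _ hi
  · obtain ⟨i, hi, rfl⟩ := Finset.mem_image.1 hB
    exact P.part_mem.2 hi

lemma part_fibrePartition (f : ι → κ) {I : Finset ι} {i : ι} (hi : i ∈ I) :
    (fibrePartition f I).part i = I.filter (f · = f i) := by
  ext j
  rw [fibrePartition, Finpartition.mem_part_ofSetSetoid_iff_rel, Finset.mem_filter,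
    Setoid.ker_def, eq_comm]
  exact ⟨fun h => h.2, fun h => ⟨hi, h⟩⟩

lemma fibrePartition_eq_iff {f : ι → κ} {I : Finset ι} {P : Finpartition I} :
    fibrePartition f I = P ↔ ∀ i ∈ I, ∀ j ∈ I, (f i = f j ↔ P.part i = P.part j) := by
  constructor
  · rintro rfl i hi j hj
    rw [← Finpartition.mem_part_iff_part_eq_part _ hi hj, part_fibrePartition f hj,
      Finset.mem_filter, and_iff_right hi]
  · intro h
    refine Finpartition.ext ?_
    rw [parts_eq_image_part, parts_eq_image_part P]
    refine Finset.image_congr fun i hi => ?_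
    ext j
    rw [part_fibrePartition f hi, Finset.mem_filter]
    refine ⟨fun hj => ?_, fun hj => ?_⟩
    · exact (P.mem_part_iff_part_eq_part hj.1 hi).2 ((h j hj.1 i hi).1 hj.2)
    · have hjI := P.part_subset i hj
      exact ⟨hjI, (h j hjI i hi).2 ((P.mem_part_iff_part_eq_part hjI hi).1 hj)⟩

lemma prod_fibres {R : Type*} [CommMonoid R] [Fintype κ] (h : Finset ι → R) (h_empty : h ∅ = 1)
    (f : ι → κ) (I : Finset ι) :
    ∏ c, h (I.filter (f · = c)) = ∏ B ∈ (fibrePartition f I).parts, h B := by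
  have hparts : (fibrePartition f I).parts = (I.image f).image fun c => I.filter (f · = c) := by
    rw [parts_eq_image_part, Finset.image_image]
    exact Finset.image_congr fun i hi => part_fibrePartition f hi
  rw [hparts, Finset.prod_image]
  · refine (Finset.prod_subset (Finset.subset_univ _) fun c _ hc => ?_).symm
    have hfibre : I.filter (f · = c) = ∅ :=
      Finset.filter_false_of_mem fun i hi hic => hc (Finset.mem_image.2 ⟨i, hi, hic⟩)
    rw [hfibre, h_empty]
  · intro c hc d _ hcd
    obtain ⟨i, hi, rfl⟩ := Finset.mem_image.1 hc
    exact (Finset.mem_filter.1 ((Finset.ext_iff.1 hcd i).1 (Finset.mem_filter.2 ⟨hi, rfl⟩))).2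

/-- The function with fibre partition `P` on `I` that takes the value `g.1 B` on the part `B` of
`P` and agrees with `g.2` off `I`. -/
def ofPartValues {I : Finset ι} (P : Finpartition I) (g : (P.parts ↪ κ) × ({i // i ∉ I} → κ))
    (i : ι) : κ :=
  if hi : i ∈ I then g.1 ⟨P.part i, P.part_mem.2 hi⟩ else g.2 ⟨i, hi⟩

omit [DecidableEq κ] in
lemma ofPartValues_injective {I : Finset ι} (P : Finpartition I) :
    Function.Injective (ofPartValues (κ := κ) P) := by
  rintro ⟨g, r⟩ ⟨g', r'⟩ h
  refine Prod.ext (DFunLike.ext _ _ ?_) (funext ?_)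
  · rintro ⟨B, hB⟩
    obtain ⟨i, hi, rfl⟩ := P.part_surjOn hB
    simpa [ofPartValues, Finset.mem_coe.1 hi] using congrFun h i
  · rintro ⟨i, hi⟩
    simpa [ofPartValues, hi] using congrFun h i

lemma range_ofPartValues {I : Finset ι} (P : Finpartition I) :
    Set.range (ofPartValues (κ := κ) P) = {f | fibrePartition f I = P} := by
  ext f
  rw [Set.mem_ofPred_eq, fibrePartition_eq_iff]
  constructor
  · rintro ⟨g, rfl⟩ i hi j hj
    simp [ofPartValues, hi, hj]
  · intro h
    have hrep : ∀ B : P.parts, ∃ i ∈ I, P.part i = B := fun B => P.part_surjOn B.2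
    choose r hrI hr using hrep
    have hinj : Function.Injective fun B => f (r B) := fun B C hBC =>
      Subtype.ext (by rw [← hr B, ← hr C]; exact (h _ (hrI B) _ (hrI C)).1 hBC)
    refine ⟨(⟨_, hinj⟩, fun i => f i), funext fun i => ?_⟩
    by_cases hi : i ∈ I
    · simpa [ofPartValues, hi] using (h _ (hrI _) i hi).2 (hr ⟨P.part i, P.part_mem.2 hi⟩)
    · simp [ofPartValues, hi]

lemma card_fibrePartition_eq [Fintype ι] [Fintype κ] {I : Finset ι} (P : Finpartition I) :
    (Finset.univ.filter fun f : ι → κ => fibrePartition f I = P).card =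
      (Fintype.card κ).descFactorial P.parts.card *
        Fintype.card κ ^ (Fintype.card ι - I.card) := by
  have himage : (Finset.univ.filter fun f : ι → κ => fibrePartition f I = P) =
      Finset.univ.image (ofPartValues P) := by
    ext f
    simpa [eq_comm] using (Set.ext_iff.1 (range_ofPartValues P) f).symm
  rw [himage, Finset.card_image_of_injective _ (ofPartValues_injective P), Finset.card_univ]
  simp [Fintype.card_embedding_eq]

omit [DecidableEq κ] in
lemma card_filter_constantOn [Fintype ι] [Fintype κ] {I : Finset ι} (hI : I.Nonempty)
    [DecidablePred fun f : ι → κ => ∀ i ∈ I, ∀ j ∈ I, f i = f j] :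
    (Finset.univ.filter fun f : ι → κ => ∀ i ∈ I, ∀ j ∈ I, f i = f j).card =
      Fintype.card κ * Fintype.card κ ^ (Fintype.card ι - I.card) := by
  classical
  let P : Finpartition I := Finpartition.indiscrete hI.ne_empty
  have hpart : ∀ i ∈ I, P.part i = I := fun i hi =>
    Finset.mem_singleton.1 (P.part_mem.2 hi)
  have hconst : ∀ f : ι → κ, (∀ i ∈ I, ∀ j ∈ I, f i = f j) ↔ fibrePartition f I = P := fun f => by
    rw [fibrePartition_eq_iff]
    exact forall₂_congr fun i hi => forall₂_congr fun j hj => by simp [hpart i hi, hpart j hj]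
  simp only [hconst, card_fibrePartition_eq]
  simp [P]

lemma sum_prod_fibres {R : Type*} [CommSemiring R] [Fintype ι] [Fintype κ] (h : Finset ι → R)
    (h_empty : h ∅ = 1) (I : Finset ι) :
    ∑ f : ι → κ, ∏ c, h (I.filter (f · = c)) =
      ∑ P : Finpartition I, ((Fintype.card κ).descFactorial P.parts.card *
        Fintype.card κ ^ (Fintype.card ι - I.card) : ℕ) * ∏ B ∈ P.parts, h B := by
  rw [← Finset.sum_fiberwise _ fun f : ι → κ => fibrePartition f I]
  refine Finset.sum_congr rfl fun P _ => ?_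
  rw [← card_fibrePartition_eq, ← nsmul_eq_mul, ← Finset.sum_const]
  refine Finset.sum_congr rfl fun f hf => ?_
  rw [prod_fibres h h_empty, (Finset.mem_filter.1 hf).2]

end Fibres

section Refinements

variable {α R : Type*} [DecidableEq α] [CommSemiring R] {I : Finset α}

lemma parts_restrict_of_le {P Q : Finpartition I} (hQP : Q ≤ P) {B : Finset α}
    (hB : B ∈ P.parts) : (Q.restrict (P.le hB)).parts = Q.parts.filter (· ⊆ B) := by
  ext C
  simp only [Finpartition.restrict, Finset.mem_erase, Finset.mem_image, Finset.mem_filter,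
    Finset.inf_eq_inter, Finset.bot_eq_empty, ← Finset.nonempty_iff_ne_empty]
  constructor
  · rintro ⟨hne, D, hD, rfl⟩
    obtain ⟨B', hB', hDB'⟩ := hQP hD
    obtain ⟨i, hi⟩ := hne
    obtain ⟨hiD, hiB⟩ := Finset.mem_inter.1 hi
    obtain rfl := P.eq_of_mem_parts hB hB' hiB (hDB' hiD)
    have hDB : D ⊆ B := hDB'
    rw [Finset.inter_eq_left.2 hDB]
    exact ⟨hD, hDB⟩
  · rintro ⟨hC, hCB⟩
    exact ⟨Q.nonempty_of_mem_parts hC, C, hC, Finset.inter_eq_left.2 hCB⟩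

/-- A refinement of `P` amounts to a partition of every part of `P`. -/
def refinementEquiv (P : Finpartition I) :
    {Q : Finpartition I // Q ≤ P} ≃ ∀ B : P.parts, Finpartition B.1 where
  toFun Q B := Q.1.restrict (P.le B.2)
  invFun ρ := ⟨P.bind fun B hB => ρ ⟨B, hB⟩, fun C hC => by
    obtain ⟨B, hB, hCB⟩ := Finpartition.mem_bind.1 hC
    exact ⟨B, hB, (ρ ⟨B, hB⟩).le hCB⟩⟩
  left_inv := by
    rintro ⟨Q, hQ⟩
    refine Subtype.ext (Finpartition.ext (Finset.ext fun C => ?_))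
    rw [Finpartition.mem_bind]
    constructor
    · rintro ⟨B, hB, hC⟩
      rw [parts_restrict_of_le hQ hB] at hC
      exact (Finset.mem_filter.1 hC).1
    · intro hC
      obtain ⟨B, hB, hCB⟩ := hQ hC
      refine ⟨B, hB, ?_⟩
      rw [parts_restrict_of_le hQ hB]
      exact Finset.mem_filter.2 ⟨hC, hCB⟩
  right_inv := by
    intro ρ
    refine funext fun B => Finpartition.ext (Finset.ext fun C => ?_)
    rw [parts_restrict_of_le _ B.2, Finset.mem_filter, Finpartition.mem_bind]
    · refine ⟨?_, fun hC => ⟨⟨B, B.2, hC⟩, (ρ B).le hC⟩⟩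
      rintro ⟨⟨B', hB', hC⟩, hCB⟩
      obtain ⟨i, hi⟩ := (ρ ⟨B', hB'⟩).nonempty_of_mem_parts hC
      obtain rfl := P.eq_of_mem_parts hB' B.2 ((ρ ⟨B', hB'⟩).le hC hi) (hCB hi)
      exact hC
    · intro C hC
      obtain ⟨B, hB, hCB⟩ := Finpartition.mem_bind.1 hC
      exact ⟨B, hB, (ρ ⟨B, hB⟩).le hCB⟩

lemma prod_parts_of_le {P Q : Finpartition I} (hQP : Q ≤ P) (W : Finset α → R) :
    ∏ B ∈ P.parts, ∏ C ∈ Q.parts.filter (· ⊆ B), W C = ∏ C ∈ Q.parts, W C := by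
  have hunion : Q.parts = P.parts.biUnion fun B => Q.parts.filter (· ⊆ B) := by
    ext C
    simp only [Finset.mem_biUnion, Finset.mem_filter]
    refine ⟨fun hC => ?_, fun ⟨_, _, hC, _⟩ => hC⟩
    obtain ⟨B, hB, hCB⟩ := hQP hC
    exact ⟨B, hB, hC, hCB⟩
  conv_rhs => rw [hunion]
  rw [Finset.prod_biUnion]
  intro B hB B' hB' hne
  refine Finset.disjoint_left.2 fun C hC hC' => hne ?_
  obtain ⟨i, hi⟩ := Q.nonempty_of_mem_parts (Finset.mem_filter.1 hC).1
  exact P.eq_of_mem_parts hB hB' ((Finset.mem_filter.1 hC).2 hi) ((Finset.mem_filter.1 hC').2 hi)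

/-- The relation between consecutive partitions of a reduced splitting chain: `Q` strictly refines
`P` and splits every part of `P` that is not a singleton. -/
def IsReducedStep (P Q : Finpartition I) : Prop :=
  Q < P ∧ ∀ B ∈ P.parts, B ∈ Q.parts → B.card ≤ 1

/-- The product, over the non-singleton parts `B` of `P`, of the weight `u B k` of splitting `B`
into the `k` parts of `Q` that it contains. -/
def stepWeight (u : Finset α → ℕ → R) (P Q : Finpartition I) : R :=
  ∏ B ∈ P.parts with 1 < B.card, u B (Q.parts.filter (· ⊆ B)).card

lemma eq_bot_of_card_le_one {P : Finpartition I} (hP : ∀ B ∈ P.parts, B.card ≤ 1) : P = ⊥ := by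
  refine eq_bot_iff.2 fun B hB => ?_
  obtain ⟨i, rfl⟩ := Finset.card_eq_one.1
    (le_antisymm (hP B hB) (Finset.card_pos.2 (P.nonempty_of_mem_parts hB)))
  exact ⟨{i}, Finpartition.mem_bot_iff.2 ⟨i, P.le hB (Finset.mem_singleton_self i), rfl⟩,
    subset_rfl⟩

lemma mem_parts_self_iff (hI : I.Nonempty) {P : Finpartition I} :
    I ∈ P.parts ↔ P = Finpartition.indiscrete hI.ne_empty := by
  refine ⟨fun h => le_antisymm (fun B hB => ⟨I, Finset.mem_singleton_self I, P.le hB⟩)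
    fun B hB => ⟨I, h, (Finset.mem_singleton.1 hB).le⟩, ?_⟩
  rintro rfl
  exact Finset.mem_singleton_self I

lemma card_of_mem_bot {B : Finset α} (hB : B ∈ (⊥ : Finpartition I).parts) : B.card = 1 := by
  obtain ⟨i, -, rfl⟩ := Finpartition.mem_bot_iff.1 hB
  exact Finset.card_singleton i

open Classical in
lemma prod_sum_finpartition (P : Finpartition I) (φ : Finset α → Finset (Finset α) → R) :
    ∏ B ∈ P.parts, ∑ ρ : Finpartition B, φ B ρ.parts =
      ∑ Q : Finpartition I with Q ≤ P, ∏ B ∈ P.parts, φ B (Q.parts.filter (· ⊆ B)) := by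
  rw [← Finset.prod_coe_sort, Finset.prod_univ_sum, Fintype.piFinset_univ,
    ← (refinementEquiv P).sum_comp, Finset.sum_subtype (p := (· ≤ P)) _ (by simp)]
  refine Finset.sum_congr rfl fun Q _ => ?_
  rw [← Finset.prod_coe_sort P.parts]
  refine Finset.prod_congr rfl fun B _ => ?_
  rw [← parts_restrict_of_le Q.2 B.2]
  rfl

lemma sum_finpartition_of_card_eq_one {B : Finset α} (hB : B.card = 1)
    (φ : Finset (Finset α) → R) : ∑ ρ : Finpartition B, φ ρ.parts = φ {B} := by
  obtain ⟨i, rfl⟩ := Finset.card_eq_one.1 hB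
  have hbot (ρ : Finpartition {i}) : ρ = ⊥ :=
    eq_bot_of_card_le_one fun C hC => (Finset.card_le_card (ρ.le hC)).trans_eq hB
  rw [Fintype.sum_eq_single ⊥ fun ρ hρ => absurd (hbot ρ) hρ]
  simp [Finpartition.parts_bot]

open Classical in
lemma prod_parts_eq_sum_isReducedStep {W : Finset α → R} {u : Finset α → ℕ → R}
    (hW : ∀ B ⊆ I, 1 < B.card → W B =
      ∑ ρ : Finpartition B with B ∉ ρ.parts, u B ρ.parts.card * ∏ C ∈ ρ.parts, W C)
    {P : Finpartition I} (hP : P ≠ ⊥) :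
    ∏ B ∈ P.parts, W B =
      ∑ Q with IsReducedStep P Q, stepWeight u P Q * ∏ C ∈ Q.parts, W C := by
  set φ : Finset α → Finset (Finset α) → R := fun B T =>
    if 1 < B.card → B ∉ T then (if 1 < B.card then u B T.card else 1) * ∏ C ∈ T, W C else 0
  have hφ : ∀ B ∈ P.parts, W B = ∑ ρ : Finpartition B, φ B ρ.parts := by
    intro B hB
    by_cases hcard : 1 < B.card
    · rw [hW B (P.le hB) hcard, Finset.sum_filter]
      simp only [φ, hcard, forall_const, if_true]
    · have hcard' : B.card = 1 :=
        le_antisymm (not_lt.1 hcard) (Finset.card_pos.2 (P.nonempty_of_mem_parts hB))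
      rw [sum_finpartition_of_card_eq_one hcard' (φ B)]
      simp [φ, hcard]
  have hstep (Q : Finpartition I) : IsReducedStep P Q ↔
      Q ≤ P ∧ ∀ B ∈ P.parts, 1 < B.card → B ∉ Q.parts.filter (· ⊆ B) := by
    have hne : (∀ B ∈ P.parts, B ∈ Q.parts → B.card ≤ 1) → Q ≠ P := by
      rintro h rfl
      exact hP (eq_bot_of_card_le_one fun B hB => h B hB hB)
    simp only [IsReducedStep, lt_iff_le_and_ne, Finset.mem_filter, subset_rfl, and_true]
    grind
  rw [Finset.prod_congr rfl hφ, prod_sum_finpartition P φ, Finset.sum_filter, Finset.sum_filter]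
  refine Finset.sum_congr rfl fun Q _ => ?_
  by_cases hQP : Q ≤ P
  · rw [if_pos hQP]
    by_cases hQ : IsReducedStep P Q
    · rw [if_pos hQ, stepWeight, Finset.prod_filter, ← prod_parts_of_le hQP,
        ← Finset.prod_mul_distrib]
      exact Finset.prod_congr rfl fun B hB => if_pos (((hstep Q).1 hQ).2 B hB)
    · rw [if_neg hQ]
      obtain ⟨B, hB, hBφ⟩ : ∃ B ∈ P.parts, ¬ (1 < B.card → B ∉ Q.parts.filter (· ⊆ B)) := by
        by_contra! h
        exact hQ ((hstep Q).2 ⟨hQP, h⟩)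
      exact Finset.prod_eq_zero hB (if_neg hBφ)
  · rw [if_neg hQP, if_neg fun hQ => hQP hQ.1.le]

end Refinements

section StepChains

variable {X R : Type*} [PartialOrder X] [OrderBot X]

/-- The chains `x = y₀, y₁, …, y_L = ⊥` with `Step y_ℓ y_{ℓ+1}`, encoded as pairs `(L, y)` where
`y ℓ = ⊥` for every `ℓ ≥ L`, so that distinct pairs are distinct chains. -/
def stepChains (Step : X → X → Prop) (x : X) : Set (ℕ × (ℕ → X)) :=
  {c | c.2 0 = x ∧ (∀ ℓ < c.1, Step (c.2 ℓ) (c.2 (ℓ + 1))) ∧ ∀ ℓ, c.1 ≤ ℓ → c.2 ℓ = ⊥}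

/-- The chain obtained from `c` by putting `x` in front. -/
def consChain (x : X) (c : ℕ × (ℕ → X)) : ℕ × (ℕ → X) :=
  (c.1 + 1, fun ℓ => Nat.casesOn ℓ x c.2)

omit [PartialOrder X] [OrderBot X] in
lemma consChain_injective (x : X) : Function.Injective (consChain x) := by
  intro c d h
  obtain ⟨hlen, hseq⟩ := Prod.ext_iff.1 h
  exact Prod.ext (Nat.succ_injective hlen) (funext fun ℓ => congrFun hseq (ℓ + 1))

variable {Step : X → X → Prop}

lemma stepChains_bot (hStep : ∀ x y, Step x y → y < x) :
    stepChains Step (⊥ : X) = {(0, fun _ => ⊥)} := by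
  refine Set.eq_singleton_iff_unique_mem.2 ⟨⟨rfl, by simp, fun _ _ => rfl⟩, ?_⟩
  intro c hc
  have hlen : c.1 = 0 := by
    by_contra hpos
    exact not_lt_bot (hc.1 ▸ hStep _ _ (hc.2.1 0 (Nat.pos_of_ne_zero hpos)))
  exact Prod.ext hlen (funext fun ℓ => hc.2.2 ℓ (by omega))

lemma stepChains_of_ne_bot {x : X} (hx : x ≠ ⊥) :
    stepChains Step x = ⋃ y ∈ {y | Step x y}, consChain x '' stepChains Step y := by
  ext ⟨L, c⟩
  simp only [Set.mem_iUnion, Set.mem_image, exists_prop, Set.mem_ofPred_eq]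
  constructor
  · rintro ⟨h0, hsteps, hbot⟩
    cases L with
    | zero => exact absurd (h0.symm.trans (hbot 0 le_rfl)) hx
    | succ L =>
      refine ⟨c 1, h0 ▸ hsteps 0 L.succ_pos, (L, fun ℓ => c (ℓ + 1)), ⟨rfl,
        fun ℓ hℓ => hsteps (ℓ + 1) (Nat.succ_lt_succ hℓ),
        fun ℓ hℓ => hbot (ℓ + 1) (Nat.succ_le_succ hℓ)⟩, Prod.ext rfl (funext fun ℓ => ?_)⟩
      cases ℓ with
      | zero => exact h0.symm
      | succ ℓ => rfl
  · rintro ⟨y, hxy, d, ⟨rfl, hsteps, hbot⟩, hd⟩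
    obtain ⟨rfl, rfl⟩ := Prod.ext_iff.1 hd
    refine ⟨rfl, fun ℓ hℓ => ?_, fun ℓ hℓ => ?_⟩
    · cases ℓ with
      | zero => exact hxy
      | succ ℓ => exact hsteps ℓ (Nat.lt_of_succ_lt_succ hℓ)
    · cases ℓ with
      | zero => exact absurd hℓ (Nat.not_succ_le_zero _)
      | succ ℓ => exact hbot ℓ (Nat.le_of_succ_le_succ hℓ)

lemma disjoint_image_consChain {x y z : X} (hyz : y ≠ z) :
    Disjoint (consChain x '' stepChains Step y) (consChain x '' stepChains Step z) :=
  (Set.disjoint_image_iff (consChain_injective x)).2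
    (Set.disjoint_left.2 fun _ hy hz => hyz (hy.1.symm.trans hz.1))

variable [Finite X]

lemma finite_stepChains (hStep : ∀ x y, Step x y → y < x) (x : X) : (stepChains Step x).Finite := by
  induction x using WellFoundedLT.induction with
  | ind x ih =>
    by_cases hx : x = ⊥
    · rw [hx, stepChains_bot hStep]
      exact Set.finite_singleton _
    · rw [stepChains_of_ne_bot hx]
      exact (Set.toFinite _).biUnion fun y hy => (ih y (hStep x y hy)).image _

lemma finsum_stepChains_of_ne_bot [CommSemiring R] (hStep : ∀ x y, Step x y → y < x)
    (w : X → X → R) {x : X} (hx : x ≠ ⊥) :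
    ∑ᶠ c ∈ stepChains Step x, ∏ ℓ ∈ Finset.range c.1, w (c.2 ℓ) (c.2 (ℓ + 1)) =
      ∑ᶠ y ∈ {y | Step x y}, w x y *
        ∑ᶠ c ∈ stepChains Step y, ∏ ℓ ∈ Finset.range c.1, w (c.2 ℓ) (c.2 (ℓ + 1)) := by
  rw [stepChains_of_ne_bot hx, finsum_mem_biUnion (fun y _ z _ => disjoint_image_consChain)
    (Set.toFinite _) fun y _ => (finite_stepChains hStep y).image _]
  refine finsum_mem_congr rfl fun y _ => ?_
  rw [finsum_mem_image (consChain_injective x).injOn,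
    mul_finsum_mem' _ _ (finite_stepChains hStep y)]
  refine finsum_mem_congr rfl fun c hc => ?_
  rw [← hc.1, mul_comm]
  exact Finset.prod_range_succ' _ c.1

theorem finsum_stepChains [CommSemiring R] (hStep : ∀ x y, Step x y → y < x) {w : X → X → R}
    {G : X → R} (hG_bot : G ⊥ = 1)
    (hG : ∀ x ≠ ⊥, G x = ∑ᶠ y ∈ {y | Step x y}, w x y * G y) (x : X) :
    ∑ᶠ c ∈ stepChains Step x, ∏ ℓ ∈ Finset.range c.1, w (c.2 ℓ) (c.2 (ℓ + 1)) = G x := by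
  induction x using WellFoundedLT.induction with
  | ind x ih =>
    by_cases hx : x = ⊥
    · rw [hx, stepChains_bot hStep, finsum_mem_singleton, hG_bot, Finset.prod_range_zero]
    · rw [finsum_stepChains_of_ne_bot hStep w hx, hG x hx]
      exact finsum_mem_congr rfl fun y hy => by rw [ih y (hStep x y hy)]

end StepChains

section SplittingChains

variable {N : ℕ} {I : Finset (Fin N)}

/-- The partition `Λ_ℓ` of a splitting chain, continued by the partition into singletons for
`ℓ > L`. -/
def SplChain.partition (S : SplChain N I) (ℓ : ℕ) : Finpartition I :=
  if hℓ : ℓ ≤ S.L then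
    Finpartition.ofExistsUnique (S.Λ ℓ) (S.subset_mem ℓ hℓ) (S.cover ℓ hℓ)
      fun h => Finset.not_nonempty_empty (S.nonempty_mem ℓ hℓ ∅ h)
  else ⊥

lemma SplChain.parts_partition (S : SplChain N I) {ℓ : ℕ} (hℓ : ℓ ≤ S.L) :
    (S.partition ℓ).parts = S.Λ ℓ := by
  rw [SplChain.partition, dif_pos hℓ, Finpartition.ofExistsUnique_parts]

lemma SplChain.partition_of_le (S : SplChain N I) {ℓ : ℕ} (hℓ : S.L ≤ ℓ) :
    S.partition ℓ = ⊥ := by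
  rcases hℓ.eq_or_lt with rfl | hlt
  · refine Finpartition.ext (Finset.ext fun B => ?_)
    rw [S.parts_partition le_rfl, S.last, Finpartition.mem_bot_iff, Finset.mem_image]
  · rw [SplChain.partition, dif_neg hlt.not_ge]

lemma SplChain.partition_succ_lt (S : SplChain N I) {ℓ : ℕ} (hℓ : ℓ < S.L) :
    S.partition (ℓ + 1) < S.partition ℓ := by
  refine lt_of_le_of_ne (fun B hB => ?_) fun h => S.strict ℓ hℓ ?_
  · rw [S.parts_partition hℓ] at hB
    rw [S.parts_partition hℓ.le]
    exact S.refines ℓ hℓ B hB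
  · rw [← S.parts_partition hℓ, ← S.parts_partition hℓ.le, h]

lemma SplChain.antitone_partition (S : SplChain N I) : Antitone S.partition := by
  refine antitone_nat_of_succ_le fun ℓ => ?_
  rcases lt_or_ge ℓ S.L with hℓ | hℓ
  · exact (S.partition_succ_lt hℓ).le
  · exact (S.partition_of_le (by omega)).trans_le bot_le

lemma SplChain.mem_branches (S : SplChain N I) {B : Finset (Fin N)} :
    B ∈ S.branches ↔ ∃ ℓ < S.L, B ∈ S.Λ ℓ ∧ 1 < B.card := by
  have hsingle (ℓ : ℕ) (hℓ : ℓ < S.L) (hB : B ∈ S.Λ ℓ) : B ∉ S.Λ S.L ↔ 1 < B.card := by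
    rw [← S.parts_partition hℓ.le] at hB
    rw [← S.parts_partition le_rfl, S.partition_of_le le_rfl]
    refine ⟨fun hbot => ?_, fun hcard hbot => (card_of_mem_bot hbot ▸ hcard).false⟩
    by_contra hcard
    obtain ⟨i, rfl⟩ := Finset.card_eq_one.1 (le_antisymm (not_lt.1 hcard)
      (Finset.card_pos.2 (Finpartition.nonempty_of_mem_parts _ hB)))
    exact hbot (Finpartition.mem_bot_iff.2
      ⟨i, (S.partition ℓ).le hB (Finset.mem_singleton_self i), rfl⟩)
  simp only [SplChain.branches, Finset.mem_sdiff, Finset.mem_biUnion, Finset.mem_range]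
  constructor
  · rintro ⟨⟨ℓ, hℓ, hB⟩, hlast⟩
    exact ⟨ℓ, hℓ, hB, (hsingle ℓ hℓ hB).1 hlast⟩
  · rintro ⟨ℓ, hℓ, hB, hcard⟩
    exact ⟨⟨ℓ, hℓ, hB⟩, (hsingle ℓ hℓ hB).2 hcard⟩

lemma mem_parts_of_mem_parts_of_le {P Q R : Finpartition I} (hQP : Q ≤ P) (hRQ : R ≤ Q)
    {B : Finset (Fin N)} (hP : B ∈ P.parts) (hR : B ∈ R.parts) : B ∈ Q.parts := by
  obtain ⟨C, hC, hBC⟩ := hRQ hR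
  obtain ⟨D, hD, hCD⟩ := hQP hC
  obtain ⟨i, hi⟩ := R.nonempty_of_mem_parts hR
  obtain rfl := P.eq_of_mem_parts hP hD hi (hCD (hBC hi))
  rwa [subset_antisymm hBC hCD]

lemma SplChain.reduced_iff (S : SplChain N I) :
    S.Reduced ↔ ∀ ℓ < S.L, IsReducedStep (S.partition ℓ) (S.partition (ℓ + 1)) := by
  constructor
  · refine fun hS ℓ hℓ => ⟨S.partition_succ_lt hℓ, fun B hB hB' => ?_⟩
    rw [S.parts_partition hℓ.le] at hB
    rw [S.parts_partition hℓ] at hB'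
    by_contra! hcard
    have hbranch := S.mem_branches.2 ⟨ℓ, hℓ, hB, hcard⟩
    have hdepth := (hS B hbranch ℓ hℓ.le).1 hB
    have hdepth' := (hS B hbranch (ℓ + 1) hℓ).1 hB'
    omega
  · intro h B hbranch ℓ hℓ
    obtain ⟨m, hm, hBm, hcard⟩ := S.mem_branches.1 hbranch
    have hnot_lt (k k' : ℕ) (hkk' : k < k') (hk' : k' ≤ S.L) (hBk : B ∈ S.Λ k)
        (hBk' : B ∈ S.Λ k') : False := by
      rw [← S.parts_partition (hkk'.le.trans hk')] at hBk
      rw [← S.parts_partition hk'] at hBk'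
      exact hcard.not_ge ((h k (by omega)).2 B hBk (mem_parts_of_mem_parts_of_le
        (S.antitone_partition k.le_succ) (S.antitone_partition hkk') hBk hBk'))
    have huniq : ∀ k ≤ S.L, B ∈ S.Λ k → k = m := by
      intro k hk hBk
      rcases lt_trichotomy k m with hkm | hkm | hkm
      · exact (hnot_lt k m hkm hm.le hBk hBm).elim
      · exact hkm
      · exact (hnot_lt m k hkm hk hBm hBk).elim
    have hlevels : (Finset.range (S.L + 1)).filter (fun k => B ∈ S.Λ k) = {m} := by
      ext k
      simp only [Finset.mem_filter, Finset.mem_range, Nat.lt_succ_iff, Finset.mem_singleton]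
      exact ⟨fun hk => huniq k hk.1 hk.2, fun hk => hk ▸ ⟨hm.le, hBm⟩⟩
    rw [SplChain.depth, hlevels, Finset.sup_singleton, id]
    exact ⟨huniq ℓ hℓ, fun hℓm => hℓm ▸ hBm⟩

lemma SplChain.ext_partition {S T : SplChain N I} (hL : S.L = T.L)
    (hpart : S.partition = T.partition) : S = T := by
  have hΛ : S.Λ = T.Λ := by
    funext ℓ
    rcases le_or_gt ℓ S.L with hℓ | hℓ
    · rw [← S.parts_partition hℓ, hpart, T.parts_partition (hℓ.trans_eq hL)]
    · rw [S.trailing ℓ hℓ, T.trailing ℓ (hL.symm.trans_lt hℓ)]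
  cases S
  cases T
  obtain rfl : _ = _ := hL
  obtain rfl : _ = _ := hΛ
  rfl

/-- The splitting chain with partitions `c.2 0, …, c.2 c.1`. -/
def splChainOfStepChain (hI : I ≠ ⊥) {c : ℕ × (ℕ → Finpartition I)}
    (hc : c ∈ stepChains IsReducedStep (Finpartition.indiscrete hI)) : SplChain N I where
  L := c.1
  Λ ℓ := if ℓ ≤ c.1 then (c.2 ℓ).parts else ∅
  nonempty_mem ℓ hℓ B hB := (c.2 ℓ).nonempty_of_mem_parts (by rwa [if_pos hℓ] at hB)
  subset_mem ℓ hℓ B hB := (c.2 ℓ).le (by rwa [if_pos hℓ] at hB)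
  cover ℓ hℓ i hi := by
    rw [if_pos hℓ]
    exact (c.2 ℓ).existsUnique_mem hi
  first := by rw [if_pos (Nat.zero_le _), hc.1, Finpartition.indiscrete_parts]
  last := by
    ext B
    rw [if_pos le_rfl, hc.2.2 _ le_rfl, Finpartition.mem_bot_iff, Finset.mem_image]
  refines ℓ hℓ B hB := by
    rw [if_pos (Nat.succ_le_of_lt hℓ)] at hB
    rw [if_pos hℓ.le]
    exact (hc.2.1 ℓ hℓ).1.le hB
  strict ℓ hℓ h := by
    rw [if_pos (Nat.succ_le_of_lt hℓ), if_pos hℓ.le] at h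
    exact (hc.2.1 ℓ hℓ).1.ne (Finpartition.ext h)
  trailing _ hℓ := if_neg hℓ.not_ge

lemma partition_splChainOfStepChain (hI : I ≠ ⊥) {c : ℕ × (ℕ → Finpartition I)}
    (hc : c ∈ stepChains IsReducedStep (Finpartition.indiscrete hI)) :
    (splChainOfStepChain hI hc).partition = c.2 := by
  funext ℓ
  rcases le_total ℓ c.1 with hℓ | hℓ
  · exact Finpartition.ext ((SplChain.parts_partition _ hℓ).trans (if_pos hℓ))
  · rw [SplChain.partition_of_le _ hℓ, hc.2.2 ℓ hℓ]

lemma bijOn_reduced_stepChains (hI : I ≠ ⊥) :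
    Set.BijOn (fun S : SplChain N I => (S.L, S.partition)) {S | S.Reduced}
      (stepChains IsReducedStep (Finpartition.indiscrete hI)) := by
  refine ⟨fun S hS => ⟨Finpartition.ext ?_, S.reduced_iff.1 hS, fun ℓ => S.partition_of_le⟩,
    fun S _ T _ h => ?_, fun c hc => ⟨splChainOfStepChain hI hc, ?_, ?_⟩⟩
  · exact (S.parts_partition S.L.zero_le).trans S.first
  · obtain ⟨hL, hpart⟩ := Prod.ext_iff.1 h
    exact SplChain.ext_partition hL hpart
  · rw [Set.mem_ofPred_eq, SplChain.reduced_iff, partition_splChainOfStepChain hI hc]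
    exact hc.2.1
  · exact Prod.ext rfl (partition_splChainOfStepChain hI hc)

lemma SplChain.prod_branches {R : Type*} [CommSemiring R] {S : SplChain N I} (hS : S.Reduced)
    (u : Finset (Fin N) → ℕ → R) :
    ∏ B ∈ S.branches, u B (S.degree B) =
      ∏ ℓ ∈ Finset.range S.L, stepWeight u (S.partition ℓ) (S.partition (ℓ + 1)) := by
  have hbranches : S.branches =
      (Finset.range S.L).biUnion fun ℓ => (S.Λ ℓ).filter fun B => 1 < B.card := by
    ext B
    simp only [S.mem_branches, Finset.mem_biUnion, Finset.mem_range, Finset.mem_filter]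
  have hdepth {ℓ : ℕ} (hℓ : ℓ < S.L) {B : Finset (Fin N)}
      (hB : B ∈ (S.Λ ℓ).filter fun B => 1 < B.card) : ℓ = S.depth B := by
    obtain ⟨hBℓ, hcard⟩ := Finset.mem_filter.1 hB
    exact (hS B (S.mem_branches.2 ⟨ℓ, hℓ, hBℓ, hcard⟩) ℓ hℓ.le).1 hBℓ
  rw [hbranches, Finset.prod_biUnion]
  · refine Finset.prod_congr rfl fun ℓ hℓ => ?_
    have hℓL := Finset.mem_range.1 hℓ
    rw [stepWeight, S.parts_partition hℓL.le, S.parts_partition hℓL]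
    exact Finset.prod_congr rfl fun B hB => by rw [SplChain.degree, ← hdepth hℓL hB]
  · intro ℓ hℓ m hm hne
    refine Finset.disjoint_left.2 fun B hB hB' => hne ?_
    exact (hdepth (Finset.mem_range.1 hℓ) hB).trans (hdepth (Finset.mem_range.1 hm) hB').symm

theorem finsum_reduced_prod_branches {R : Type*} [CommSemiring R] (hI : I.Nonempty)
    {W : Finset (Fin N) → R} {u : Finset (Fin N) → ℕ → R} (hW_one : ∀ B, B.card = 1 → W B = 1)
    (hW : ∀ B ⊆ I, 1 < B.card → W B =
      ∑ ρ : Finpartition B with B ∉ ρ.parts, u B ρ.parts.card * ∏ C ∈ ρ.parts, W C) :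
    ∑ᶠ S ∈ {S : SplChain N I | S.Reduced}, ∏ B ∈ S.branches, u B (S.degree B) = W I := by
  have hI' : I ≠ ⊥ := hI.ne_empty
  refine (finsum_mem_eq_of_bijOn
    (g := fun c => ∏ ℓ ∈ Finset.range c.1, stepWeight u (c.2 ℓ) (c.2 (ℓ + 1)))
    _ (bijOn_reduced_stepChains hI') ?_).trans ?_
  · exact fun S hS => SplChain.prod_branches hS u
  rw [finsum_stepChains (G := fun P => ∏ B ∈ P.parts, W B) fun P Q h => h.1]
  · rw [Finpartition.indiscrete_parts, Finset.prod_singleton]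
  · exact Finset.prod_eq_one fun B hB => hW_one B (card_of_mem_bot hB)
  · intro P hP
    rw [prod_parts_eq_sum_isReducedStep hW hP, ← finsum_mem_coe_finset]
    simp only [Finset.coe_filter, Finset.mem_univ, true_and]

end SplittingChains

section ProductMeasures

open ProbabilityTheory

variable {ι κ α : Type*} [Fintype ι] [MeasurableSpace α]

lemma pi_eq_smul_sum_map [Fintype κ] [DecidableEq ι] {ν : Measure α} [SigmaFinite ν] {c : ENNReal}
    {T : κ → α → α} (hT : ∀ a, Measurable (T a)) [∀ a, SigmaFinite (ν.map (T a))]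
    (h : ν = c • ∑ a, ν.map (T a)) :
    Measure.pi (fun _ : ι => ν) =
      c ^ Fintype.card ι •
        ∑ f : ι → κ, (Measure.pi fun _ : ι => ν).map fun x i => T (f i) (x i) := by
  refine Measure.pi_eq fun S _ => ?_
  have hmap : ∀ f : ι → κ, ((Measure.pi fun _ : ι => ν).map fun x i => T (f i) (x i))
      (Set.univ.pi S) = ∏ i, (ν.map (T (f i))) (S i) := fun f => by
    rw [Measure.pi_map_pi fun i => (hT (f i)).aemeasurable, Measure.pi_pi]
  have hone : ∀ i, ν (S i) = c * ∑ a, (ν.map (T a)) (S i) := fun i => by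
    conv_lhs => rw [h]
    simp only [Measure.smul_apply, Measure.finsetSum_apply, smul_eq_mul]
  simp only [Measure.smul_apply, Measure.finsetSum_apply, smul_eq_mul, hmap, hone,
    Finset.prod_mul_distrib, Finset.prod_univ_sum, Fintype.piFinset_univ, Finset.prod_const,
    Finset.card_univ]

variable {X : ι → Type*} [∀ i, MeasurableSpace (X i)]

lemma map_pi_fibres [Fintype κ] [DecidableEq κ] (ν : ∀ i, Measure (X i))
    [∀ i, SigmaFinite (ν i)] (f : ι → κ) :
    (Measure.pi fun c => Measure.pi fun i : {i // f i = c} => ν i).map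
      (fun z i => z (f i) ⟨i, rfl⟩) = Measure.pi ν := by
  refine (Measure.pi_eq fun S hS => ?_).symm
  have hpre : (fun (z : ∀ c, ∀ i : {i // f i = c}, X i) i => z (f i) ⟨i, rfl⟩) ⁻¹'
      Set.univ.pi S = Set.univ.pi fun c => Set.univ.pi fun i : {i // f i = c} => S i := by
    ext z
    simp only [Set.mem_preimage, Set.mem_univ_pi, Subtype.forall]
    exact ⟨fun h c i hi => by subst hi; exact h i, fun h i => h _ i rfl⟩
  rw [Measure.map_apply (by fun_prop) (.univ_pi hS), hpre]
  simp only [Measure.pi_pi]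
  exact Fintype.prod_fiberwise f fun i => ν i (S i)

variable [Finite κ]

lemma iIndepFun_restrict_fibres (ν : ∀ i, Measure (X i)) [∀ i, IsProbabilityMeasure (ν i)]
    (f : ι → κ) :
    iIndepFun (fun c (x : ∀ i, X i) (i : {i // f i = c}) => x i) (Measure.pi ν) := by
  classical
  have := Fintype.ofFinite κ
  rw [iIndepFun_iff_map_fun_eq_pi_map fun c => (by fun_prop : Measurable _).aemeasurable,
    ← map_pi_fibres ν f, Measure.map_map (by fun_prop) (by fun_prop)]
  have hleft : (fun (x : ∀ i, X i) c (i : {i // f i = c}) => x i) ∘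
      (fun (z : ∀ c, ∀ i : {i // f i = c}, X i) i => z (f i) ⟨i, rfl⟩) = id := by
    ext z c ⟨i, rfl⟩
    rfl
  rw [hleft, Measure.map_id]
  congr 1 with c : 1
  rw [Measure.map_map (by fun_prop) (by fun_prop)]
  refine (measurePreserving_eval (fun c => Measure.pi fun i : {i // f i = c} => ν i)
    c).map_eq.symm.trans (congrArg (Measure.map · _) ?_)
  ext z ⟨i, rfl⟩
  rfl

lemma iIndepFun_of_dependsOn_fibres [∀ i, Nonempty (X i)] {β : κ → Type*}
    [∀ c, MeasurableSpace (β c)] (ν : ∀ i, Measure (X i)) [∀ i, IsProbabilityMeasure (ν i)]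
    {f : ι → κ} {g : ∀ c, (∀ i, X i) → β c} (hg : ∀ c, Measurable (g c))
    (hdep : ∀ c, DependsOn (g c) {i | f i = c}) : iIndepFun g (Measure.pi ν) := by
  classical
  let extend (c : κ) (z : ∀ i : {i // f i = c}, X i) (i : ι) : X i :=
    if h : f i = c then z ⟨i, h⟩ else Classical.arbitrary (X i)
  have hextend : ∀ c, Measurable (extend c) := fun c => measurable_pi_lambda _ fun i => by
    by_cases h : f i = c <;> simp only [extend, h, dite_true, dite_false] <;> fun_prop
  have hcomp := (iIndepFun_restrict_fibres ν f).comp (fun c => g c ∘ extend c)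
    fun c => (hg c).comp (hextend c)
  refine hcomp.congr fun c => .of_forall fun x => hdep c fun i (hi : f i = c) => ?_
  simp only [extend, hi, dite_true]

end ProductMeasures

section Digits

open scoped ENNReal Pointwise

lemma map_smul_eq_inv_distribHaarChar_smul {G A : Type*} [Group G] [AddCommGroup A]
    [DistribMulAction G A] [TopologicalSpace A] [IsTopologicalAddGroup A] [LocallyCompactSpace A]
    [ContinuousConstSMul G A] [MeasurableSpace A] [BorelSpace A] (μ : Measure A)
    [μ.IsAddHaarMeasure] [μ.Regular] (g : G) :
    μ.map (g • ·) = (distribHaarChar A g)⁻¹ • μ := by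
  ext S hS
  rw [Measure.map_apply (continuous_const_smul g).measurable hS, Set.preimage_smul,
    ← distribHaarChar_mul, map_inv, Measure.smul_apply, ENNReal.smul_def, smul_eq_mul]

variable {p : ℕ} [hp : Fact p.Prime]

lemma norm_digit_sub {a b : Fin p} (h : a ≠ b) : ‖((a : ℕ) : ℚ_[p]) - ((b : ℕ) : ℚ_[p])‖ = 1 := by
  have hdvd : ¬(p : ℤ) ∣ (a : ℤ) - (b : ℤ) := fun hd => h <| by
    have := Int.eq_zero_of_abs_lt_dvd hd (by rw [abs_lt]; omega)
    omega
  have hint : ‖(((a : ℤ) - (b : ℤ) : ℤ) : ℚ_[p])‖ = 1 :=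
    le_antisymm (Padic.norm_int_le_one _) (not_lt.1 (mt Padic.norm_intCast_lt_one_iff.1 hdvd))
  exact_mod_cast hint

lemma norm_p_mul_lt_one_iff (y : ℚ_[p]) : ‖(p : ℚ_[p]) * y‖ < 1 ↔ ‖y‖ ≤ 1 := by
  rw [norm_mul, Padic.norm_p, inv_mul_lt_iff₀ (by exact_mod_cast hp.out.pos), mul_one]
  simpa using (Padic.norm_le_pow_iff_norm_lt_pow_add_one y 0).symm

lemma exists_norm_sub_digit_lt_one {x : ℚ_[p]} (hx : ‖x‖ ≤ 1) :
    ∃ a : Fin p, ‖x - ((a : ℕ) : ℚ_[p])‖ < 1 := by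
  obtain ⟨n, hn, h⟩ := PadicInt.exists_mem_range (⟨x, hx⟩ : ℤ_[p])
  rw [PadicInt.maximalIdeal_eq_span_p, Ideal.mem_span_singleton, ← PadicInt.norm_lt_one_iff_dvd]
    at h
  exact ⟨⟨n, hn⟩, h⟩

lemma pairwise_disjoint_residueBall :
    Pairwise (Function.onFun Disjoint fun a : Fin p => Metric.ball ((a : ℕ) : ℚ_[p]) 1) := by
  refine fun a b hab => (IsUltrametricDist.ball_eq_or_disjoint _ _ _).resolve_left fun heq => ?_
  have hmem : ((a : ℕ) : ℚ_[p]) ∈ Metric.ball ((b : ℕ) : ℚ_[p]) 1 :=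
    heq ▸ Metric.mem_ball_self one_pos
  exact (mem_ball_iff_norm.1 hmem).ne (norm_digit_sub hab)

lemma iUnion_residueBall : ⋃ a : Fin p, Metric.ball ((a : ℕ) : ℚ_[p]) 1 = Zball p := by
  ext x
  simp only [Set.mem_iUnion, mem_ball_iff_norm]
  refine ⟨fun ⟨a, ha⟩ => ?_, exists_norm_sub_digit_lt_one⟩
  have := IsUltrametricDist.norm_add_le_max (x - ((a : ℕ) : ℚ_[p])) ((a : ℕ) : ℚ_[p])
  rw [sub_add_cancel] at this
  exact this.trans (max_le ha.le (by exact_mod_cast Padic.norm_int_le_one (a : ℤ)))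

/-- The inverse of the digit expansion: `digitMap a y` is the `p`-adic integer with first digit
`a` and remaining digits those of `y`. -/
noncomputable def digitMap (a : Fin p) (y : ℚ_[p]) : ℚ_[p] := (a : ℕ) + p * y

lemma measurable_digitMap (a : Fin p) : Measurable (digitMap a) :=
  (by unfold digitMap; fun_prop : Continuous (digitMap a)).measurable

lemma digitMap_sub_digitMap_same (a : Fin p) (x y : ℚ_[p]) :
    digitMap a x - digitMap a y = p * (x - y) := by
  unfold digitMap
  ring

lemma norm_digitMap_sub_digitMap_of_ne {a b : Fin p} (h : a ≠ b) {x y : ℚ_[p]} (hx : ‖x‖ ≤ 1)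
    (hy : ‖y‖ ≤ 1) : ‖digitMap a x - digitMap b y‖ = 1 := by
  have hrest : ‖(p : ℚ_[p]) * (x - y)‖ < 1 := by
    rw [norm_p_mul_lt_one_iff, sub_eq_add_neg]
    exact (IsUltrametricDist.norm_add_le_max x (-y)).trans (max_le hx (by rwa [norm_neg]))
  have hsplit : digitMap a x - digitMap b y =
      (((a : ℕ) : ℚ_[p]) - ((b : ℕ) : ℚ_[p])) + p * (x - y) := by
    unfold digitMap
    ring
  rw [← norm_digit_sub h] at hrest ⊢
  rw [hsplit, Padic.add_eq_max_of_ne hrest.ne', max_eq_left hrest.le]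

lemma preimage_digitMap_ball (a : Fin p) :
    digitMap a ⁻¹' Metric.ball ((a : ℕ) : ℚ_[p]) 1 = Zball p := by
  ext y
  simp only [Set.mem_preimage, mem_ball_iff_norm, digitMap, add_sub_cancel_left,
    norm_p_mul_lt_one_iff, Zball, Set.mem_ofPred_eq]

/-- The prime `p` as a unit of `ℚ_p`, through which it acts on `ℚ_p` by scaling. -/
noncomputable def primeUnit (p : ℕ) [hp : Fact p.Prime] : ℚ_[p]ˣ :=
  Units.mk0 p (by exact_mod_cast hp.out.ne_zero)

lemma primeUnit_zpow_smul (v : ℤ) (x : ℚ_[p]) : primeUnit p ^ v • x = (p : ℚ_[p]) ^ v * x := by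
  rw [Units.smul_def, Units.val_zpow_eq_zpow_val]
  rfl

variable (μ : Measure ℚ_[p]) [μ.IsAddHaarMeasure]

lemma map_digitMap (a : Fin p) :
    μ.map (digitMap a) = (distribHaarChar ℚ_[p] (primeUnit p))⁻¹ • μ := by
  have hcomp : digitMap a = (((a : ℕ) : ℚ_[p]) + ·) ∘ (primeUnit p • ·) := rfl
  rw [hcomp, ← Measure.map_map (by fun_prop) (continuous_const_smul _).measurable,
    map_smul_eq_inv_distribHaarChar_smul, Measure.map_smul, map_add_left_eq_self]

lemma restrict_Zball_eq_distribHaarChar_smul_sum_map :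
    μ.restrict (Zball p) = distribHaarChar ℚ_[p] (primeUnit p) •
      ∑ a : Fin p, (μ.restrict (Zball p)).map (digitMap a) := by
  have hball : ∀ a : Fin p, (μ.restrict (Zball p)).map (digitMap a) =
      (distribHaarChar ℚ_[p] (primeUnit p))⁻¹ •
        μ.restrict (Metric.ball ((a : ℕ) : ℚ_[p]) 1) := fun a => by
    rw [← preimage_digitMap_ball a, ← Measure.restrict_map (measurable_digitMap a)
      Metric.isOpen_ball.measurableSet, map_digitMap, Measure.restrict_smul]
  simp only [hball]
  rw [← Finset.smul_sum, smul_inv_smul₀ distribHaarChar_pos.ne', ← iUnion_residueBall,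
    Measure.restrict_iUnion pairwise_disjoint_residueBall
      fun _ => Metric.isOpen_ball.measurableSet, Measure.sum_fintype]

lemma measure_Zball_ne_zero : μ (Zball p) ≠ 0 :=
  ((Metric.isOpen_ball.measure_pos μ ⟨0, Metric.mem_ball_self one_pos⟩).trans_le
    (measure_mono fun x (hx : x ∈ Metric.ball 0 1) =>
      (mem_ball_zero_iff.1 hx).le)).ne'

lemma measure_Zball_ne_top : μ (Zball p) ≠ ∞ := by
  have : Zball p = Metric.closedBall 0 1 := by ext; simp [Zball]
  exact this ▸ (isCompact_closedBall _ _).measure_ne_top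

lemma distribHaarChar_primeUnit : distribHaarChar ℚ_[p] (primeUnit p) = (p : NNReal)⁻¹ := by
  let μ : Measure ℚ_[p] := Measure.addHaar
  have hmass := congrArg (· Set.univ) (restrict_Zball_eq_distribHaarChar_smul_sum_map μ)
  simp only [Measure.smul_apply, Measure.finsetSum_apply, Measure.restrict_apply_univ,
    Measure.map_apply (measurable_digitMap _) .univ, Set.preimage_univ, Finset.sum_const,
    Finset.card_univ, Fintype.card_fin, ENNReal.smul_def, smul_eq_mul, nsmul_eq_mul,
    ← mul_assoc] at hmass
  have hone := (ENNReal.mul_eq_right (measure_Zball_ne_zero μ) (measure_Zball_ne_top μ)).1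
    hmass.symm
  exact eq_inv_of_mul_eq_one_left (by exact_mod_cast hone)

lemma restrict_Zball_eq_smul_sum_map_digitMap :
    μ.restrict (Zball p) =
      (p : ℝ≥0∞)⁻¹ • ∑ a : Fin p, (μ.restrict (Zball p)).map (digitMap a) := by
  conv_lhs => rw [restrict_Zball_eq_distribHaarChar_smul_sum_map, distribHaarChar_primeUnit]
  rw [← Measure.coe_nnreal_smul, ENNReal.coe_inv (Nat.cast_ne_zero.2 hp.out.ne_zero),
    ENNReal.coe_natCast]

lemma measurableSet_pvball (v : ℤ) : MeasurableSet (pvball p v) :=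
  (isClosed_le continuous_norm continuous_const).measurableSet

lemma preimage_zpow_mul_pvball (v : ℤ) :
    (fun x => (p : ℚ_[p]) ^ v * x) ⁻¹' pvball p v = Zball p := by
  ext y
  simp only [pvball, Zball, Set.mem_ofPred_eq, Set.mem_preimage, norm_mul, Padic.norm_p_zpow]
  exact mul_le_iff_le_one_right (zpow_pos (by exact_mod_cast hp.out.pos) _)

lemma restrict_pvball (v : ℤ) :
    μ.restrict (pvball p v) =
      (p : ℝ≥0∞) ^ (-v) • (μ.restrict (Zball p)).map fun x => (p : ℚ_[p]) ^ v * x := by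
  have hp0 : (p : ℝ≥0∞) ≠ 0 := Nat.cast_ne_zero.2 hp.out.ne_zero
  have hpv0 : (p : ℝ≥0∞) ^ v ≠ 0 := (ENNReal.zpow_pos hp0 (ENNReal.natCast_ne_top p) v).ne'
  have hpv : (p : ℝ≥0∞) ^ v ≠ ∞ := ENNReal.zpow_ne_top hp0 (ENNReal.natCast_ne_top p) v
  have hmap : μ.map (fun x => (p : ℚ_[p]) ^ v * x) = (p : ℝ≥0∞) ^ v • μ := by
    simp only [← primeUnit_zpow_smul]
    rw [map_smul_eq_inv_distribHaarChar_smul, map_zpow, distribHaarChar_primeUnit, inv_zpow,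
      inv_inv, ← Measure.coe_nnreal_smul, ENNReal.coe_zpow (Nat.cast_ne_zero.2 hp.out.ne_zero),
      ENNReal.coe_natCast]
  rw [← preimage_zpow_mul_pvball v,
    ← Measure.restrict_map (by fun_prop) (measurableSet_pvball v), hmap, Measure.restrict_smul,
    smul_smul, ENNReal.zpow_neg, ENNReal.inv_mul_cancel hpv0 hpv, one_smul]

end Digits

section DigitSelfSimilarity

open scoped ENNReal

variable {p : ℕ} [hp : Fact p.Prime]

/-- The property of Haar measure on `ℤ_p` that drives the whole computation: `ν` lives on `ℤ_p`,
and under `ν` the first digit is uniform and independent of the remaining ones, which are again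
distributed according to `ν`. -/
structure DigitSelfSimilar (ν : Measure ℚ_[p]) : Prop where
  ae_norm_le_one : ∀ᵐ x ∂ν, ‖x‖ ≤ 1
  eq_smul_sum_map : ν = (p : ℝ≥0∞)⁻¹ • ∑ a : Fin p, ν.map (digitMap a)

lemma digitSelfSimilar_restrict_Zball (μ : Measure ℚ_[p]) [μ.IsAddHaarMeasure] :
    DigitSelfSimilar (μ.restrict (Zball p)) where
  ae_norm_le_one :=
    ae_restrict_mem (isClosed_le continuous_norm continuous_const).measurableSet
  eq_smul_sum_map := restrict_Zball_eq_smul_sum_map_digitMap μ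

lemma measurable_pi_digitMap {ι : Type*} (f : ι → Fin p) :
    Measurable fun (y : ι → ℚ_[p]) i => digitMap (f i) (y i) :=
  measurable_pi_lambda _ fun i => (measurable_digitMap (f i)).comp (measurable_pi_apply i)

variable {ι : Type*} [Fintype ι] {ν : Measure ℚ_[p]} [IsFiniteMeasure ν]

namespace DigitSelfSimilar

variable (hν : DigitSelfSimilar ν)
include hν

lemma ae_pi_norm_le_one : ∀ᵐ y ∂Measure.pi fun _ : ι => ν, ∀ i, ‖y i‖ ≤ 1 :=
  ae_all_iff.2 fun i =>
    (Measure.quasiMeasurePreserving_eval (fun _ => ν) i).ae hν.ae_norm_le_one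

lemma pi_eq_smul_sum_map [DecidableEq ι] :
    Measure.pi (fun _ : ι => ν) = (p : ℝ≥0∞)⁻¹ ^ Fintype.card ι •
      ∑ f : ι → Fin p, (Measure.pi fun _ => ν).map fun y i => digitMap (f i) (y i) :=
  LogCoulomb.pi_eq_smul_sum_map measurable_digitMap hν.eq_smul_sum_map

lemma lintegral_pi [DecidableEq ι] {g : (ι → ℚ_[p]) → ℝ≥0∞} (hg : Measurable g) :
    ∫⁻ x, g x ∂(Measure.pi fun _ => ν) = (p : ℝ≥0∞)⁻¹ ^ Fintype.card ι *
      ∑ f : ι → Fin p, ∫⁻ y, g (fun i => digitMap (f i) (y i)) ∂(Measure.pi fun _ => ν) := by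
  conv_lhs => rw [hν.pi_eq_smul_sum_map]
  simp only [lintegral_smul_measure, lintegral_finsetSum_measure, smul_eq_mul,
    lintegral_map hg (measurable_pi_digitMap _)]

lemma integral_pi [DecidableEq ι] {g : (ι → ℚ_[p]) → ℂ} (hg : Measurable g)
    (hint : Integrable g (Measure.pi fun _ => ν)) :
    ∫ x, g x ∂(Measure.pi fun _ => ν) = ((p : ℂ) ^ Fintype.card ι)⁻¹ *
      ∑ f : ι → Fin p, ∫ y, g (fun i => digitMap (f i) (y i)) ∂(Measure.pi fun _ => ν) := by
  have hc : (p : ℝ≥0∞)⁻¹ ^ Fintype.card ι ≠ 0 :=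
    pow_ne_zero _ (ENNReal.inv_ne_zero.2 (ENNReal.natCast_ne_top p))
  rw [hν.pi_eq_smul_sum_map, integrable_smul_measure hc (by simp [hp.out.ne_zero]),
    integrable_finsetSum_measure] at hint
  conv_lhs => rw [hν.pi_eq_smul_sum_map]
  rw [integral_smul_measure, integral_finsetSum_measure hint]
  simp only [integral_map (measurable_pi_digitMap _).aemeasurable hg.aestronglyMeasurable]
  simp

end DigitSelfSimilar

end DigitSelfSimilarity

section Interaction

variable {N : ℕ} {p : ℕ} [hp : Fact p.Prime]

/-- The index pairs `i < j` with both entries in `I`. -/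
def pairsIn (I : Finset (Fin N)) : Finset (Fin N × Fin N) :=
  (pairs N).filter fun q => q.1 ∈ I ∧ q.2 ∈ I

/-- The exponent sum `∑_{i<j, i,j ∈ I} s_{ij}`, the degree of homogeneity of the interaction. -/
def exponentSum (s : Fin N → Fin N → ℂ) (I : Finset (Fin N)) : ℂ :=
  ∑ q ∈ pairsIn I, s q.1 q.2

/-- The integrand `∏_{i<j, i,j ∈ I} |x_i - x_j|^{s_{ij}}`, as a function of the full tuple `x`. -/
noncomputable def interaction (s : Fin N → Fin N → ℂ) (I : Finset (Fin N))
    (x : Fin N → ℚ_[p]) : ℂ :=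
  ∏ q ∈ pairsIn I, (‖x q.1 - x q.2‖ : ℂ) ^ s q.1 q.2

variable (s : Fin N → Fin N → ℂ) (I : Finset (Fin N))

lemma eexp_eq_add_exponentSum : eexp I s = (I.card : ℂ) - 1 + exponentSum s I := rfl

lemma measurable_interaction : Measurable (interaction (p := p) s I) := by
  unfold interaction
  fun_prop

lemma dependsOn_interaction : DependsOn (interaction (p := p) s I) I := by
  intro x y h
  refine Finset.prod_congr rfl fun q hq => ?_
  have hqI := (Finset.mem_filter.1 hq).2
  rw [h q.1 hqI.1, h q.2 hqI.2]

lemma pairsIn_univ (N : ℕ) : pairsIn (Finset.univ : Finset (Fin N)) = pairs N := by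
  simp [pairsIn]

lemma pairsIn_eq_empty {I : Finset (Fin N)} (hI : I.card ≤ 1) : pairsIn I = ∅ := by
  refine Finset.filter_eq_empty_iff.2 fun q hq hqI => ?_
  exact (Finset.mem_filter.1 hq).2.ne (Finset.card_le_one.1 hI _ hqI.1 _ hqI.2)

lemma interaction_eq_one {I : Finset (Fin N)} (hI : I.card ≤ 1) (x : Fin N → ℚ_[p]) :
    interaction s I x = 1 := by
  rw [interaction, pairsIn_eq_empty hI, Finset.prod_empty]

lemma interaction_mul_left {c : ℚ_[p]} (hc : c ≠ 0) (x : Fin N → ℚ_[p]) :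
    interaction s I (fun i => c * x i) = (‖c‖ : ℂ) ^ exponentSum s I * interaction s I x := by
  have hc' : (‖c‖ : ℂ) ≠ 0 := by exact_mod_cast norm_ne_zero_iff.2 hc
  simp only [interaction, exponentSum, ← mul_sub, norm_mul, Complex.ofReal_mul,
    Complex.mul_cpow_ofReal_nonneg (norm_nonneg _) (norm_nonneg _), Finset.prod_mul_distrib]
  simp only [Complex.cpow_def_of_ne_zero hc', Finset.mul_sum, Complex.exp_sum]

lemma interaction_zpow_mul (v : ℤ) (x : Fin N → ℚ_[p]) :
    interaction s I (fun i => (p : ℚ_[p]) ^ v * x i) =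
      (p : ℂ) ^ (-(v : ℂ) * exponentSum s I) * interaction s I x := by
  have hp0 : (p : ℂ) ≠ 0 := Nat.cast_ne_zero.2 hp.out.ne_zero
  have hpow : (0 : ℝ) < (p : ℝ) ^ (-v) := zpow_pos (by exact_mod_cast hp.out.pos) _
  rw [interaction_mul_left s I (zpow_ne_zero v (by exact_mod_cast hp.out.ne_zero)),
    Padic.norm_p_zpow, Complex.cpow_def_of_ne_zero (by exact_mod_cast hpow.ne'),
    Complex.cpow_def_of_ne_zero hp0, ← Complex.ofReal_log hpow.le, Real.log_zpow,
    ← Complex.natCast_log]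
  push_cast
  ring_nf

lemma interaction_digitMap (f : Fin N → Fin p) {y : Fin N → ℚ_[p]} (hy : ∀ i, ‖y i‖ ≤ 1) :
    interaction s I (fun i => digitMap (f i) (y i)) =
      ∏ c, interaction s (I.filter (f · = c)) fun i => (p : ℚ_[p]) * y i := by
  have hfibre : ∀ c, pairsIn (I.filter (f · = c)) =
      (pairsIn I).filter fun q => f q.1 = c ∧ f q.2 = c := fun c => by
    ext q
    simp only [pairsIn, Finset.mem_filter]
    tauto
  simp only [interaction, hfibre, Finset.prod_filter (s := pairsIn I)]
  rw [Finset.prod_comm]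
  refine Finset.prod_congr rfl fun q _ => ?_
  rcases eq_or_ne (f q.1) (f q.2) with heq | hne
  · rw [Fintype.prod_eq_single (f q.1) fun c hc => if_neg fun h => hc h.1.symm,
      if_pos ⟨rfl, heq.symm⟩, heq, digitMap_sub_digitMap_same, mul_sub]
  · rw [norm_digitMap_sub_digitMap_of_ne hne (hy _) (hy _), Complex.ofReal_one, Complex.one_cpow]
    exact (Finset.prod_eq_one fun c _ => if_neg fun h => hne (h.1.trans h.2.symm)).symm

end Interaction

section Convergence

open ProbabilityTheory
open scoped ENNReal

variable {N : ℕ} {p : ℕ} [hp : Fact p.Prime]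

/-- The configurations in which two of the points indexed by `I` are more than `p⁻ᵏ` apart; as `k`
grows these exhaust the complement of the diagonal. -/
def spreadSet (p : ℕ) [Fact p.Prime] (I : Finset (Fin N)) (k : ℕ) : Set (Fin N → ℚ_[p]) :=
  {x | ∃ i ∈ I, ∃ j ∈ I, (p : ℝ)⁻¹ ^ k < ‖x i - x j‖}

lemma measurableSet_spreadSet (I : Finset (Fin N)) (k : ℕ) : MeasurableSet (spreadSet p I k) := by
  have heq : spreadSet p I k =
      ⋃ i ∈ I, ⋃ j ∈ I, {x : Fin N → ℚ_[p] | (p : ℝ)⁻¹ ^ k < ‖x i - x j‖} := by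
    ext x
    simp [spreadSet]
  rw [heq]
  exact (isOpen_biUnion fun i _ => isOpen_biUnion fun j _ =>
    isOpen_lt continuous_const (by fun_prop)).measurableSet

lemma inv_prime_lt_one : (p : ℝ)⁻¹ < 1 :=
  inv_lt_one_of_one_lt₀ (Nat.one_lt_cast.2 hp.out.one_lt)

lemma inv_prime_pos : 0 < (p : ℝ)⁻¹ := inv_pos.2 (Nat.cast_pos.2 hp.out.pos)

lemma spreadSet_mono (I : Finset (Fin N)) : Monotone (spreadSet p I) :=
  fun _ _ hkl _ ⟨i, hi, j, hj, h⟩ =>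
    ⟨i, hi, j, hj, (pow_le_pow_of_le_one inv_prime_pos.le inv_prime_lt_one.le hkl).trans_lt h⟩

lemma mem_iUnion_spreadSet_iff {I : Finset (Fin N)} {x : Fin N → ℚ_[p]} :
    x ∈ ⋃ k, spreadSet p I k ↔ ∃ i ∈ I, ∃ j ∈ I, x i ≠ x j := by
  simp only [Set.mem_iUnion, spreadSet, Set.mem_ofPred_eq]
  constructor
  · rintro ⟨k, i, hi, j, hj, h⟩
    exact ⟨i, hi, j, hj, sub_ne_zero.1 (norm_pos_iff.1 ((pow_pos inv_prime_pos k).trans h))⟩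
  · rintro ⟨i, hi, j, hj, h⟩
    obtain ⟨k, hk⟩ := exists_pow_lt_of_lt_one (norm_pos_iff.2 (sub_ne_zero.2 h))
      (inv_prime_lt_one (p := p))
    exact ⟨k, i, hi, j, hj, hk⟩

lemma notMem_spreadSet_zero {I : Finset (Fin N)} {x : Fin N → ℚ_[p]} (hx : ∀ i, ‖x i‖ ≤ 1) :
    x ∉ spreadSet p I 0 := by
  rintro ⟨i, -, j, -, h⟩
  rw [pow_zero, sub_eq_add_neg] at h
  refine h.not_ge ((IsUltrametricDist.norm_add_le_max _ _).trans (max_le (hx i) ?_))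
  rw [norm_neg]
  exact hx j

lemma digitMap_mem_spreadSet_of_ne {I : Finset (Fin N)} {f : Fin N → Fin p} {i j : Fin N}
    (hi : i ∈ I) (hj : j ∈ I) (hf : f i ≠ f j) (k : ℕ) {y : Fin N → ℚ_[p]}
    (hy : ∀ i, ‖y i‖ ≤ 1) : (fun i => digitMap (f i) (y i)) ∈ spreadSet p I (k + 1) := by
  refine ⟨i, hi, j, hj, ?_⟩
  rw [norm_digitMap_sub_digitMap_of_ne hf (hy i) (hy j)]
  exact pow_lt_one₀ inv_prime_pos.le inv_prime_lt_one k.succ_ne_zero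

lemma digitMap_mem_spreadSet_iff {I : Finset (Fin N)} {f : Fin N → Fin p}
    (hf : ∀ i ∈ I, ∀ j ∈ I, f i = f j) (k : ℕ) (y : Fin N → ℚ_[p]) :
    (fun i => digitMap (f i) (y i)) ∈ spreadSet p I (k + 1) ↔ y ∈ spreadSet p I k := by
  simp only [spreadSet, Set.mem_ofPred_eq]
  refine exists_congr fun i => and_congr_right fun hi => exists_congr fun j =>
    and_congr_right fun hj => ?_
  rw [hf i hi j hj, digitMap_sub_digitMap_same, norm_mul, Padic.norm_p, pow_succ',
    mul_lt_mul_iff_right₀ inv_prime_pos]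

variable (s : Fin N → Fin N → ℂ) {I : Finset (Fin N)}

lemma measurable_interaction_prime_mul (I : Finset (Fin N)) :
    Measurable fun y : Fin N → ℚ_[p] => interaction s I fun i => (p : ℚ_[p]) * y i :=
  (measurable_interaction s I).comp (by fun_prop)

lemma interaction_prime_mul (I : Finset (Fin N)) (x : Fin N → ℚ_[p]) :
    interaction s I (fun i => (p : ℚ_[p]) * x i) =
      (p : ℂ) ^ (-exponentSum s I) * interaction s I x := by
  simpa using interaction_zpow_mul s I 1 x

lemma interaction_digitMap_of_constantOn {f : Fin N → Fin p}
    (hf : ∀ i ∈ I, ∀ j ∈ I, f i = f j) (y : Fin N → ℚ_[p]) :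
    interaction s I (fun i => digitMap (f i) (y i)) =
      (p : ℂ) ^ (-exponentSum s I) * interaction s I y := by
  rw [← interaction_prime_mul]
  refine Finset.prod_congr rfl fun q hq => ?_
  have hqI := (Finset.mem_filter.1 hq).2
  simp only [hf q.1 hqI.1 q.2 hqI.2, digitMap_sub_digitMap_same, mul_sub]

lemma complex_enorm_natCast (n : ℕ) : ‖(n : ℂ)‖ₑ = n := by
  rw [← ofReal_norm, Complex.norm_natCast, ENNReal.ofReal_natCast]

lemma enorm_prime_cpow_neg_lt_one_iff (z : ℂ) : ‖(p : ℂ) ^ (-z)‖ₑ < 1 ↔ 0 < z.re := by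
  rw [← ofReal_norm, ENNReal.ofReal_lt_one, Complex.norm_natCast_cpow_of_pos hp.out.pos,
    Real.rpow_lt_one_iff_of_pos (Nat.cast_pos.2 hp.out.pos)]
  have hp1 : (1 : ℝ) < p := Nat.one_lt_cast.2 hp.out.one_lt
  simp [hp1, hp1.not_gt]

lemma enorm_prime_cpow_neg_eexp (I : Finset (Fin N)) :
    ‖(p : ℂ) ^ (-eexp I s)‖ₑ =
      (p : ℝ≥0∞)⁻¹ ^ N * (p * p ^ (N - I.card) : ℕ) * ‖(p : ℂ) ^ (-exponentSum s I)‖ₑ := by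
  have hp0 : (p : ℂ) ≠ 0 := Nat.cast_ne_zero.2 hp.out.ne_zero
  have hN : I.card ≤ N := by simpa using Finset.card_le_univ I
  have hcpow : (p : ℂ) ^ (-eexp I s) =
      ((p : ℂ)⁻¹ ^ N * (p * p ^ (N - I.card) : ℕ)) * (p : ℂ) ^ (-exponentSum s I) := by
    rw [eexp_eq_add_exponentSum, neg_add, Complex.cpow_add _ _ hp0]
    congr 1
    rw [neg_sub, Complex.cpow_sub _ _ hp0, Complex.cpow_one, Complex.cpow_natCast]
    push_cast
    rw [pow_sub₀ _ hp0 hN, inv_pow]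
    field_simp
  rw [hcpow, enorm_mul, enorm_mul, enorm_pow, enorm_inv hp0, complex_enorm_natCast,
    complex_enorm_natCast]

variable {ν : Measure ℚ_[p]}

variable (ν) in
/-- The absolute moment `∫ |∏_{i<j, i,j ∈ I} |x_i - x_j|^{s_{ij}}|` over `(pℤ_p)^N`, normalised to
total mass one. -/
noncomputable def absIntegral (s : Fin N → Fin N → ℂ) (I : Finset (Fin N)) : ℝ≥0∞ :=
  ∫⁻ y, ‖interaction s I fun i => (p : ℚ_[p]) * y i‖ₑ ∂(Measure.pi fun _ => ν)

variable (ν) in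
/-- The part of `∫ |∏_{i<j, i,j ∈ I} |x_i - x_j|^{s_{ij}}|` contributed by the configurations whose
points indexed by `I` do not all have the same first digit, factored over the digits. -/
noncomputable def scatteredIntegral (s : Fin N → Fin N → ℂ) (I : Finset (Fin N)) : ℝ≥0∞ :=
  (p : ℝ≥0∞)⁻¹ ^ N * ∑ f : Fin N → Fin p with ¬ ∀ i ∈ I, ∀ j ∈ I, f i = f j,
    ∏ c, absIntegral ν s (I.filter (f · = c))

lemma absIntegral_eq_mul_lintegral (I : Finset (Fin N)) :
    absIntegral ν s I = ‖(p : ℂ) ^ (-exponentSum s I)‖ₑ *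
      ∫⁻ x, ‖interaction s I x‖ₑ ∂(Measure.pi fun _ => ν) := by
  simp only [absIntegral, interaction_prime_mul, enorm_mul]
  exact lintegral_const_mul _ (measurable_interaction s I).enorm

lemma absIntegral_ne_top_iff_integrable (I : Finset (Fin N)) :
    absIntegral ν s I ≠ ∞ ↔ Integrable (interaction s I) (Measure.pi fun _ => ν) := by
  have hp0 : (p : ℂ) ≠ 0 := Nat.cast_ne_zero.2 hp.out.ne_zero
  rw [absIntegral_eq_mul_lintegral, Integrable, HasFiniteIntegral, lt_top_iff_ne_top,
    and_iff_right (measurable_interaction s I).aestronglyMeasurable, Ne, Ne, ENNReal.mul_eq_top]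
  simp [hp0]

variable [IsProbabilityMeasure ν]

lemma iIndepFun_interaction_fibres (I : Finset (Fin N))
    (f : Fin N → Fin p) :
    iIndepFun (fun c (y : Fin N → ℚ_[p]) =>
      interaction s (I.filter (f · = c)) fun i => (p : ℚ_[p]) * y i) (Measure.pi fun _ => ν) := by
  refine iIndepFun_of_dependsOn_fibres (f := f) _
    (fun _ => measurable_interaction_prime_mul _ _) fun c x y hxy => ?_
  exact dependsOn_interaction _ _ fun i hi => by
    rw [hxy i (Finset.mem_filter.1 (Finset.mem_coe.1 hi)).2]

lemma lintegral_prod_interaction_fibres (I : Finset (Fin N)) (f : Fin N → Fin p) :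
    ∫⁻ y, ∏ c, ‖interaction s (I.filter (f · = c)) fun i => (p : ℚ_[p]) * y i‖ₑ
      ∂(Measure.pi fun _ => ν) = ∏ c, absIntegral ν s (I.filter (f · = c)) :=
  lintegral_prod_eq_prod_lintegral_of_indepFun Finset.univ _
    ((iIndepFun_interaction_fibres s I f).comp (fun _ => enorm) fun _ => measurable_enorm)
    fun _ => (measurable_interaction_prime_mul _ _).enorm

lemma absIntegral_eq_one (hI : I.card ≤ 1) : absIntegral ν s I = 1 := by
  simp [absIntegral, interaction_eq_one s hI]

namespace DigitSelfSimilar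

variable (hν : DigitSelfSimilar ν)
include hν

lemma setLIntegral_spreadSet_zero (I : Finset (Fin N)) (g : (Fin N → ℚ_[p]) → ℝ≥0∞) :
    ∫⁻ x in spreadSet p I 0, g x ∂(Measure.pi fun _ => ν) = 0 := by
  refine setLIntegral_measure_zero _ _ (measure_eq_zero_iff_ae_notMem.2 ?_)
  filter_upwards [hν.ae_pi_norm_le_one] with x hx using notMem_spreadSet_zero hx

lemma setLIntegral_enorm_interaction (hI : I.Nonempty) {A B : Set (Fin N → ℚ_[p])}
    (hA : MeasurableSet A) (hB : MeasurableSet B)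
    (h_ne : ∀ (f : Fin N → Fin p), ∀ i ∈ I, ∀ j ∈ I, f i ≠ f j →
      ∀ y : Fin N → ℚ_[p], (∀ i, ‖y i‖ ≤ 1) → (fun i => digitMap (f i) (y i)) ∈ A)
    (h_eq : ∀ (f : Fin N → Fin p), (∀ i ∈ I, ∀ j ∈ I, f i = f j) →
      ∀ y : Fin N → ℚ_[p], (fun i => digitMap (f i) (y i)) ∈ A ↔ y ∈ B) :
    ∫⁻ x in A, ‖interaction s I x‖ₑ ∂(Measure.pi fun _ => ν) =
      scatteredIntegral ν s I + ‖(p : ℂ) ^ (-eexp I s)‖ₑ *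
        ∫⁻ x in B, ‖interaction s I x‖ₑ ∂(Measure.pi fun _ => ν) := by
  have hmeas := (measurable_interaction (p := p) s I).enorm
  have hconstant : ∀ f : Fin N → Fin p, (∀ i ∈ I, ∀ j ∈ I, f i = f j) →
      ∫⁻ y, A.indicator (‖interaction s I ·‖ₑ) (fun i => digitMap (f i) (y i))
        ∂(Measure.pi fun _ => ν) =
      ‖(p : ℂ) ^ (-exponentSum s I)‖ₑ *
        ∫⁻ x in B, ‖interaction s I x‖ₑ ∂(Measure.pi fun _ => ν) := fun f hf => by
    rw [← lintegral_indicator hB, ← lintegral_const_mul _ (hmeas.indicator hB)]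
    congr 1 with y
    classical
    simp only [Set.indicator_apply, h_eq f hf, interaction_digitMap_of_constantOn s hf, enorm_mul,
      mul_ite, mul_zero]
  have hscattered : ∀ f : Fin N → Fin p, (¬ ∀ i ∈ I, ∀ j ∈ I, f i = f j) →
      ∫⁻ y, A.indicator (‖interaction s I ·‖ₑ) (fun i => digitMap (f i) (y i))
        ∂(Measure.pi fun _ => ν) = ∏ c, absIntegral ν s (I.filter (f · = c)) := fun f hf => by
    push Not at hf
    obtain ⟨i, hi, j, hj, hij⟩ := hf
    rw [← lintegral_prod_interaction_fibres]
    refine lintegral_congr_ae ?_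
    filter_upwards [hν.ae_pi_norm_le_one] with y hy
    rw [Set.indicator_of_mem (h_ne f i hi j hj hij y hy), interaction_digitMap s I f hy]
    simp only [enorm_eq_nnnorm, nnnorm_prod, ENNReal.ofNNReal_finsetProd]
  rw [← lintegral_indicator hA, hν.lintegral_pi (hmeas.indicator hA),
    ← Finset.sum_filter_not_add_sum_filter Finset.univ
      fun f : Fin N → Fin p => ∀ i ∈ I, ∀ j ∈ I, f i = f j,
    Finset.sum_congr rfl fun f hf => hscattered f (Finset.mem_filter.1 hf).2,
    Finset.sum_congr rfl fun f hf => hconstant f (Finset.mem_filter.1 hf).2, Finset.sum_const,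
    card_filter_constantOn hI, enorm_prime_cpow_neg_eexp, scatteredIntegral]
  simp only [Fintype.card_fin, nsmul_eq_mul, mul_add, mul_assoc]

lemma setLIntegral_spreadSet (hI : I.Nonempty) (k : ℕ) :
    ∫⁻ x in spreadSet p I k, ‖interaction s I x‖ₑ ∂(Measure.pi fun _ => ν) =
      scatteredIntegral ν s I * ∑ j ∈ Finset.range k, ‖(p : ℂ) ^ (-eexp I s)‖ₑ ^ j := by
  induction k with
  | zero => simp [hν.setLIntegral_spreadSet_zero]
  | succ k ih =>
    rw [hν.setLIntegral_enorm_interaction s hI (measurableSet_spreadSet I _)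
      (measurableSet_spreadSet I k)
      (fun f i hi j hj hij y => digitMap_mem_spreadSet_of_ne hi hj hij k)
      (fun f hf => digitMap_mem_spreadSet_iff hf k), ih, Finset.sum_range_succ']
    simp only [pow_succ', ← Finset.mul_sum]
    ring

lemma setLIntegral_iUnion_spreadSet (hI : I.Nonempty) :
    ∫⁻ x in ⋃ k, spreadSet p I k, ‖interaction s I x‖ₑ ∂(Measure.pi fun _ => ν) =
      scatteredIntegral ν s I * (1 - ‖(p : ℂ) ^ (-eexp I s)‖ₑ)⁻¹ := by
  rw [setLIntegral_iUnion_of_directed _ (directed_of_isDirected_le (spreadSet_mono I))]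
  simp only [hν.setLIntegral_spreadSet s hI]
  rw [← ENNReal.mul_iSup, ← ENNReal.tsum_eq_iSup_nat, ENNReal.tsum_geometric]

lemma ae_mem_iUnion_spreadSet (hI : 1 < I.card) :
    ∀ᵐ x ∂Measure.pi fun _ => ν, x ∈ ⋃ k, spreadSet p I k := by
  have hIne : I.Nonempty := Finset.card_pos.1 (one_pos.trans hI)
  have hone : ∀ x : Fin N → ℚ_[p], interaction 0 I x = 1 := fun x => by simp [interaction]
  have hlt : ‖(p : ℂ) ^ (-eexp I 0)‖ₑ < 1 :=
    (enorm_prime_cpow_neg_lt_one_iff _).2 (by simpa [eexp] using hI)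
  have htotal := hν.setLIntegral_enorm_interaction 0 hIne .univ .univ
    (fun _ _ _ _ _ _ _ _ => trivial) fun _ _ _ => Iff.rfl
  have hunion := hν.setLIntegral_iUnion_spreadSet 0 hIne
  simp only [hone, enorm_one, setLIntegral_one, measure_univ, mul_one] at htotal hunion
  rw [ENNReal.eq_sub_of_add_eq hlt.ne_top htotal.symm,
    ENNReal.mul_inv_cancel (tsub_pos_of_lt hlt).ne' (ENNReal.sub_ne_top ENNReal.one_ne_top)]
    at hunion
  exact (mem_ae_iff_prob_eq_one (MeasurableSet.iUnion (measurableSet_spreadSet I))).2 hunion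

lemma lintegral_enorm_interaction (hI : 1 < I.card) :
    ∫⁻ x, ‖interaction s I x‖ₑ ∂(Measure.pi fun _ => ν) =
      scatteredIntegral ν s I * (1 - ‖(p : ℂ) ^ (-eexp I s)‖ₑ)⁻¹ := by
  rw [← hν.setLIntegral_iUnion_spreadSet s (Finset.card_pos.1 (one_pos.trans hI)),
    Measure.restrict_eq_self_of_ae_mem (hν.ae_mem_iUnion_spreadSet hI)]

lemma absIntegral_ne_zero (I : Finset (Fin N)) : absIntegral ν s I ≠ 0 := by
  have hdiag : ∀ᵐ y ∂Measure.pi fun _ => ν, ∀ q : Fin N × Fin N, q.1 ≠ q.2 → y q.1 ≠ y q.2 := by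
    refine ae_all_iff.2 fun q => ?_
    rcases eq_or_ne q.1 q.2 with h | h
    · exact .of_forall fun y hq => absurd h hq
    · filter_upwards [hν.ae_mem_iUnion_spreadSet (Finset.card_pair h ▸ one_lt_two)] with y hy _ heq
      obtain ⟨i, hi, j, hj, hij⟩ := mem_iUnion_spreadSet_iff.1 hy
      simp only [Finset.mem_insert, Finset.mem_singleton] at hi hj
      rcases hi with rfl | rfl <;> rcases hj with rfl | rfl <;> simp_all
  intro h
  rw [absIntegral, lintegral_eq_zero_iff (measurable_interaction_prime_mul s I).enorm] at h
  obtain ⟨y, hne, hzero⟩ := (hdiag.and h).exists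
  refine Finset.prod_ne_zero_iff.2 (fun q hq => ?_) (enorm_eq_zero.1 hzero)
  have hyq := hne q (Finset.mem_filter.1 (Finset.mem_filter.1 hq).1).2.ne
  rw [← mul_sub, Complex.cpow_ne_zero_iff]
  simp [hp.out.ne_zero, sub_ne_zero.2 hyq]

lemma scatteredIntegral_ne_zero (hI : 1 < I.card) : scatteredIntegral ν s I ≠ 0 := by
  obtain ⟨i, hi, j, hj, hij⟩ := Finset.one_lt_card.1 hI
  refine mul_ne_zero (pow_ne_zero _ (ENNReal.inv_ne_zero.2 (ENNReal.natCast_ne_top p))) fun h => ?_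
  refine Finset.prod_ne_zero_iff.2 (fun c _ => hν.absIntegral_ne_zero s _)
    (Finset.sum_eq_zero_iff.1 h (Pi.single i 1)
      (Finset.mem_filter.2 ⟨Finset.mem_univ _, fun hf => ?_⟩))
  simpa [hij, hp.out.ne_one] using hf i hi j hj

lemma absIntegral_ne_top_of_scatteredIntegral_ne_top (h : scatteredIntegral ν s I ≠ ∞)
    {B : Finset (Fin N)} (hB : B ⊂ I) : absIntegral ν s B ≠ ∞ := by
  rcases B.eq_empty_or_nonempty with rfl | ⟨i, hi⟩
  · rw [absIntegral_eq_one s (by simp)]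
    exact ENNReal.one_ne_top
  obtain ⟨j, hj, hjB⟩ := Finset.exists_of_ssubset hB
  let f : Fin N → Fin p := fun l => if l ∈ B then 0 else 1
  have h01 : (0 : Fin p) ≠ 1 := by simp [hp.out.ne_one]
  have hf : ¬ ∀ i ∈ I, ∀ j ∈ I, f i = f j := fun hf =>
    h01 (by simpa [f, hi, hjB] using hf i (hB.subset hi) j hj)
  have hfibre : I.filter (f · = 0) = B := by
    ext l
    simpa [f, h01.symm] using fun hl : l ∈ B => hB.subset hl
  have hsum := (ENNReal.lt_top_of_mul_ne_top_right h
    (pow_ne_zero _ (ENNReal.inv_ne_zero.2 (ENNReal.natCast_ne_top p)))).ne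
  have hprod := ENNReal.sum_ne_top.1 hsum f (Finset.mem_filter.2 ⟨Finset.mem_univ _, hf⟩)
  rw [← Finset.mul_prod_erase _ _ (Finset.mem_univ 0), hfibre] at hprod
  exact (ENNReal.lt_top_of_mul_ne_top_left hprod
    (Finset.prod_ne_zero_iff.2 fun c _ => hν.absIntegral_ne_zero s _)).ne

lemma scatteredIntegral_ne_top_iff :
    scatteredIntegral ν s I ≠ ∞ ↔ ∀ B ⊂ I, absIntegral ν s B ≠ ∞ := by
  refine ⟨fun h B => hν.absIntegral_ne_top_of_scatteredIntegral_ne_top s h, fun h => ?_⟩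
  refine ENNReal.mul_ne_top (by simp [hp.out.ne_zero]) (ENNReal.sum_ne_top.2 fun f hf =>
    ENNReal.prod_ne_top fun c _ => h _ ((Finset.filter_subset _ _).ssubset_of_ne fun heq =>
      (Finset.mem_filter.1 hf).2 fun i hi j hj => ?_))
  rw [← heq] at hi hj
  exact (Finset.mem_filter.1 hi).2.trans (Finset.mem_filter.1 hj).2.symm

lemma integrable_interaction_iff_forall_ssubset (hI : 1 < I.card) :
    Integrable (interaction s I) (Measure.pi fun _ => ν) ↔
      (∀ B ⊂ I, Integrable (interaction s B) (Measure.pi fun _ => ν)) ∧ 0 < (eexp I s).re := by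
  have hgeom : (1 - ‖(p : ℂ) ^ (-eexp I s)‖ₑ)⁻¹ ≠ 0 :=
    ENNReal.inv_ne_zero.2 (ENNReal.sub_ne_top ENNReal.one_ne_top)
  simp only [← absIntegral_ne_top_iff_integrable]
  rw [← hν.scatteredIntegral_ne_top_iff, ← enorm_prime_cpow_neg_lt_one_iff (p := p),
    absIntegral_ne_top_iff_integrable, Integrable, HasFiniteIntegral, lt_top_iff_ne_top,
    and_iff_right (measurable_interaction s I).aestronglyMeasurable,
    hν.lintegral_enorm_interaction s hI, Ne, ENNReal.mul_eq_top, ENNReal.inv_eq_top,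
    tsub_eq_zero_iff_le]
  simp only [hν.scatteredIntegral_ne_zero s hI, hgeom, ne_eq, not_false_eq_true, true_and,
    not_or, not_le, and_comm]

lemma integrable_interaction_iff_inOmega (I : Finset (Fin N)) :
    Integrable (interaction s I) (Measure.pi fun _ => ν) ↔ InOmega I s := by
  induction I using Finset.strongInduction with
  | H I ih =>
  rcases lt_or_ge 1 I.card with hI | hI
  · rw [hν.integrable_interaction_iff_forall_ssubset s hI, forall₂_congr ih]
    refine ⟨fun h B hB hcard => ?_, fun h => ⟨fun B hB C hC => ?_, h I subset_rfl hI⟩⟩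
    · rcases hB.eq_or_ssubset with rfl | hssub
      exacts [h.2, h.1 B hssub B subset_rfl hcard]
    · exact h C (hC.trans hB.subset)
  · refine iff_of_true ?_ fun B hB hcard =>
      absurd hI (hcard.trans_le (Finset.card_le_card hB)).not_ge
    rw [← absIntegral_ne_top_iff_integrable, absIntegral_eq_one s hI]
    exact ENNReal.one_ne_top

end DigitSelfSimilar

end Convergence

section Evaluation

open ProbabilityTheory

lemma descFactorial_eq_mul_descFactorial_pred (n : ℕ) {k : ℕ} (hk : k ≠ 0) :
    n.descFactorial k = n * (n - 1).descFactorial (k - 1) := by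
  obtain ⟨k, rfl⟩ := Nat.exists_eq_succ_of_ne_zero hk
  cases n with
  | zero => rw [Nat.zero_descFactorial_succ, zero_mul]
  | succ n => exact Nat.succ_descFactorial_succ n k

variable {N : ℕ} {p : ℕ} [hp : Fact p.Prime] {ν : Measure ℚ_[p]}
  (s : Fin N → Fin N → ℂ) {I : Finset (Fin N)}

variable (ν) in
/-- The integral `∫ ∏_{i<j, i,j ∈ I} |x_i - x_j|^{s_{ij}}` over `(pℤ_p)^N`, normalised to total mass
one. -/
noncomputable def contractedIntegral (s : Fin N → Fin N → ℂ) (I : Finset (Fin N)) : ℂ :=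
  ∫ y, interaction s I (fun i => (p : ℚ_[p]) * y i) ∂(Measure.pi fun _ => ν)

lemma integral_interaction_eq_cpow_mul (I : Finset (Fin N)) :
    ∫ x, interaction s I x ∂(Measure.pi fun _ => ν) =
      (p : ℂ) ^ exponentSum s I * contractedIntegral ν s I := by
  have hp0 : (p : ℂ) ≠ 0 := Nat.cast_ne_zero.2 hp.out.ne_zero
  simp only [contractedIntegral, interaction_prime_mul]
  rw [integral_const_mul, ← mul_assoc, ← Complex.cpow_add _ _ hp0, add_neg_cancel,
    Complex.cpow_zero, one_mul]

variable [IsProbabilityMeasure ν]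

lemma contractedIntegral_eq_one (hI : I.card ≤ 1) : contractedIntegral ν s I = 1 := by
  simp [contractedIntegral, interaction_eq_one s hI]

lemma integral_prod_interaction_fibres (I : Finset (Fin N)) (f : Fin N → Fin p) :
    ∫ y, ∏ c, interaction s (I.filter (f · = c)) (fun i => (p : ℚ_[p]) * y i)
      ∂(Measure.pi fun _ => ν) = ∏ c, contractedIntegral ν s (I.filter (f · = c)) :=
  (iIndepFun_interaction_fibres s I f).integral_fun_prod_eq_prod_integral
    fun _ => (measurable_interaction_prime_mul _ _).aestronglyMeasurable

namespace DigitSelfSimilar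

variable (hν : DigitSelfSimilar ν)
include hν

lemma integral_interaction (h : InOmega I s) :
    ∫ x, interaction s I x ∂(Measure.pi fun _ => ν) = ((p : ℂ) ^ N)⁻¹ *
      ∑ f : Fin N → Fin p, ∏ c, contractedIntegral ν s (I.filter (f · = c)) := by
  rw [hν.integral_pi (measurable_interaction s I)
    ((hν.integrable_interaction_iff_inOmega s I).2 h), Fintype.card_fin]
  refine congrArg _ (Finset.sum_congr rfl fun f _ => ?_)
  rw [← integral_prod_interaction_fibres]
  refine integral_congr_ae ?_
  filter_upwards [hν.ae_pi_norm_le_one] with y hy using interaction_digitMap s I f hy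

lemma prime_cpow_eexp_mul_contractedIntegral (h : InOmega I s) (hI : I.Nonempty) :
    (p : ℂ) ^ eexp I s * contractedIntegral ν s I = ∑ P : Finpartition I,
      ((p - 1).descFactorial (P.parts.card - 1) : ℂ) *
        ∏ B ∈ P.parts, contractedIntegral ν s B := by
  have hp0 : (p : ℂ) ≠ 0 := Nat.cast_ne_zero.2 hp.out.ne_zero
  have hcard : I.card ≤ N := by simpa using Finset.card_le_univ I
  have hrec := hν.integral_interaction s h
  rw [sum_prod_fibres _ (contractedIntegral_eq_one s (by simp)), Finset.mul_sum,
    integral_interaction_eq_cpow_mul] at hrec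
  rw [eexp_eq_add_exponentSum, Complex.cpow_add _ _ hp0, mul_assoc, hrec, Finset.mul_sum]
  refine Finset.sum_congr rfl fun P _ => ?_
  have hparts : P.parts.card ≠ 0 := (P.parts_nonempty hI.ne_empty).card_ne_zero
  rw [Fintype.card_fin, Fintype.card_fin, descFactorial_eq_mul_descFactorial_pred p hparts,
    Complex.cpow_sub _ _ hp0, Complex.cpow_natCast, Complex.cpow_one]
  push_cast
  rw [pow_sub₀ _ hp0 hcard]
  field_simp

lemma contractedIntegral_eq_sum_finpartition (h : InOmega I s) (hI : 1 < I.card) :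
    contractedIntegral ν s I = ∑ P : Finpartition I with I ∉ P.parts,
      ((p - 1).descFactorial (P.parts.card - 1) : ℂ) / ((p : ℂ) ^ eexp I s - 1) *
        ∏ B ∈ P.parts, contractedIntegral ν s B := by
  have hIne : I.Nonempty := Finset.card_pos.1 (one_pos.trans hI)
  have hrec := hν.prime_cpow_eexp_mul_contractedIntegral s h hIne
  have hne : (p : ℂ) ^ eexp I s - 1 ≠ 0 := fun h0 => by
    have hnorm := Complex.norm_natCast_cpow_of_pos hp.out.pos (eexp I s)
    rw [sub_eq_zero.1 h0, norm_one] at hnorm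
    exact (Real.one_lt_rpow (Nat.one_lt_cast.2 hp.out.one_lt) (h I subset_rfl hI)).ne hnorm
  have hindiscrete : ∑ P : Finpartition I with I ∈ P.parts,
      ((p - 1).descFactorial (P.parts.card - 1) : ℂ) * ∏ B ∈ P.parts, contractedIntegral ν s B =
      contractedIntegral ν s I := by
    simp only [mem_parts_self_iff hIne, Finset.filter_eq', Finset.mem_univ, if_true,
      Finset.sum_singleton, Finpartition.indiscrete_parts, Finset.card_singleton,
      Finset.prod_singleton, Nat.sub_self, Nat.descFactorial_zero, Nat.cast_one, one_mul]
  rw [← Finset.sum_filter_add_sum_filter_not Finset.univ fun P : Finpartition I => I ∈ P.parts,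
    hindiscrete] at hrec
  simp only [div_mul_eq_mul_div, ← Finset.sum_div]
  rw [eq_div_iff hne, mul_comm, sub_mul, one_mul, hrec, add_sub_cancel_left]

lemma finsum_reduced_eq_contractedIntegral (h : InOmega I s) (hI : I.Nonempty) :
    ∑ᶠ S ∈ {S : SplChain N I | S.Reduced}, ∏ B ∈ S.branches,
        ((p - 1).descFactorial (S.degree B - 1) : ℂ) / ((p : ℂ) ^ eexp B s - 1) =
      contractedIntegral ν s I :=
  finsum_reduced_prod_branches hI
    (u := fun B k => ((p - 1).descFactorial (k - 1) : ℂ) / ((p : ℂ) ^ eexp B s - 1))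
    (fun _ hB => contractedIntegral_eq_one s hB.le) fun _ hB hcard =>
      hν.contractedIntegral_eq_sum_finpartition s (fun C hC => h C (hC.trans hB)) hcard

lemma integral_interaction_eq_finsum (h : InOmega I s) (hI : I.Nonempty) :
    ∫ x, interaction s I x ∂(Measure.pi fun _ => ν) = (p : ℂ) ^ exponentSum s I *
      ∑ᶠ S ∈ {S : SplChain N I | S.Reduced}, ∏ B ∈ S.branches,
        ((p - 1).descFactorial (S.degree B - 1) : ℂ) / ((p : ℂ) ^ eexp B s - 1) := by
  rw [integral_interaction_eq_cpow_mul, hν.finsum_reduced_eq_contractedIntegral s h hI]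

end DigitSelfSimilar

end Evaluation

section Balls

open scoped ENNReal

variable {N : ℕ} {p : ℕ} [hp : Fact p.Prime]

/-- The integrand `∏_{i<j, i,j ∈ I} |x_i - x_j|^{s_{ij}}` of `𝒵_I`, as a function of the
coordinates indexed by `I` only. -/
noncomputable def interactionOn (s : Fin N → Fin N → ℂ) (I : Finset (Fin N)) (x : I → ℚ_[p]) : ℂ :=
  ∏ q ∈ Finset.univ.filter (fun q : (↥I) × (↥I) => (q.1 : Fin N) < (q.2 : Fin N)),
    (‖x q.1 - x q.2‖ : ℂ) ^ s q.1.1 q.2.1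

lemma prod_pairs_coe {M : Type*} [CommMonoid M] (I : Finset (Fin N)) (g : Fin N × Fin N → M) :
    ∏ q ∈ Finset.univ.filter (fun q : (↥I) × (↥I) => (q.1 : Fin N) < (q.2 : Fin N)),
      g (q.1, q.2) = ∏ q ∈ pairsIn I, g q := by
  refine Finset.prod_bij (fun q _ => (q.1.1, q.2.1)) (fun q hq => ?_) (fun q _ r _ h => ?_)
    (fun q hq => ?_) fun _ _ => rfl
  · simp [pairsIn, pairs, (Finset.mem_filter.1 hq).2]
  · exact Prod.ext (Subtype.ext (congrArg Prod.fst h)) (Subtype.ext (congrArg Prod.snd h))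
  · obtain ⟨hlt, hI⟩ := Finset.mem_filter.1 hq
    exact ⟨(⟨q.1, hI.1⟩, ⟨q.2, hI.2⟩), by simpa [pairs] using hlt, rfl⟩

lemma interactionOn_restrict (s : Fin N → Fin N → ℂ) (I : Finset (Fin N)) (x : Fin N → ℚ_[p]) :
    interactionOn s I (I.restrict x) = interaction s I x :=
  prod_pairs_coe I fun q => (‖x q.1 - x q.2‖ : ℂ) ^ s q.1 q.2

lemma measurable_interactionOn (s : Fin N → Fin N → ℂ) (I : Finset (Fin N)) :
    Measurable (interactionOn (p := p) s I) := by
  unfold interactionOn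
  fun_prop

lemma interactionOn_restrict_zpow_mul (s : Fin N → Fin N → ℂ) (I : Finset (Fin N)) (v : ℤ)
    (x : Fin N → ℚ_[p]) :
    interactionOn s I (I.restrict fun i => (p : ℚ_[p]) ^ v * x i) =
      (p : ℂ) ^ (-(v : ℂ) * exponentSum s I) * interaction s I x := by
  rw [interactionOn_restrict, interaction_zpow_mul]

lemma measurable_restrict_zpow_mul (I : Finset (Fin N)) (v : ℤ) :
    Measurable fun x : Fin N → ℚ_[p] => I.restrict fun i => (p : ℚ_[p]) ^ v * x i :=
  (Finset.measurable_restrict I).comp (by fun_prop)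

lemma toReal_natCast_zpow (n : ℕ) (v : ℤ) : ((n : ℝ≥0∞) ^ v).toReal = (n : ℝ) ^ v := by
  cases v <;> simp [zpow_negSucc]

variable (μ : Measure ℚ_[p]) [SigmaFinite μ] [μ.IsAddHaarMeasure]

lemma pi_restrict_pvball {ι : Type*} [Fintype ι] (v : ℤ) :
    Measure.pi (fun _ : ι => μ.restrict (pvball p v)) =
      ((p : ℝ≥0∞) ^ (-v)) ^ Fintype.card ι •
        (Measure.pi fun _ : ι => μ.restrict (Zball p)).map fun x i => (p : ℚ_[p]) ^ v * x i := by
  refine Measure.pi_eq fun t ht => ?_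
  have hpreimage : (fun (x : ι → ℚ_[p]) i => (p : ℚ_[p]) ^ v * x i) ⁻¹' Set.univ.pi t =
      Set.univ.pi fun i => (fun x => (p : ℚ_[p]) ^ v * x) ⁻¹' t i := rfl
  rw [Measure.smul_apply, Measure.map_apply (by fun_prop) (MeasurableSet.univ_pi ht), hpreimage,
    Measure.pi_pi, smul_eq_mul, ← Finset.card_univ, ← Finset.prod_const, ← Finset.prod_mul_distrib]
  refine Finset.prod_congr rfl fun i _ => ?_
  rw [restrict_pvball, Measure.smul_apply, Measure.map_apply (by fun_prop) (ht i), smul_eq_mul]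

variable [IsProbabilityMeasure (μ.restrict (Zball p))]

lemma pi_restrict_pvball_finset (v : ℤ) (I : Finset (Fin N)) :
    Measure.pi (fun _ : I => μ.restrict (pvball p v)) =
      ((p : ℝ≥0∞) ^ (-v)) ^ I.card • (Measure.pi fun _ : Fin N => μ.restrict (Zball p)).map
        fun x => I.restrict fun i => (p : ℚ_[p]) ^ v * x i := by
  have hmarginal : Measure.pi (fun _ : I => μ.restrict (Zball p)) =
      (Measure.pi fun _ : Fin N => μ.restrict (Zball p)).map I.restrict := by
    rw [← Measure.infinitePi_eq_pi (ι := Fin N), Measure.infinitePi_map_restrict]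
  rw [pi_restrict_pvball, Fintype.card_coe, hmarginal]
  exact congrArg _ (Measure.map_map (by fun_prop) (Finset.measurable_restrict I))

lemma integrable_interactionOn_pvball_iff (v : ℤ) (I : Finset (Fin N)) (s : Fin N → Fin N → ℂ) :
    Integrable (interactionOn s I) (Measure.pi fun _ => μ.restrict (pvball p v)) ↔
      InOmega I s := by
  have hp0 : (p : ℝ≥0∞) ≠ 0 := Nat.cast_ne_zero.2 hp.out.ne_zero
  have hcpow : IsUnit ((p : ℂ) ^ (-(v : ℂ) * exponentSum s I)) :=
    isUnit_iff_ne_zero.2 (by simp [Complex.cpow_eq_zero_iff, hp.out.ne_zero])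
  rw [pi_restrict_pvball_finset, integrable_smul_measure
      (pow_ne_zero _ (ENNReal.zpow_pos hp0 (ENNReal.natCast_ne_top p) _).ne')
      (ENNReal.pow_ne_top (ENNReal.zpow_ne_top hp0 (ENNReal.natCast_ne_top p) _)),
    integrable_map_measure (measurable_interactionOn s I).aestronglyMeasurable
      (measurable_restrict_zpow_mul I v).aemeasurable,
    ← (digitSelfSimilar_restrict_Zball μ).integrable_interaction_iff_inOmega]
  simp only [Function.comp_def, interactionOn_restrict_zpow_mul]
  exact integrable_const_mul_iff hcpow _

lemma integral_interactionOn_pvball (v : ℤ) (I : Finset (Fin N)) (s : Fin N → Fin N → ℂ) :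
    ∫ x, interactionOn s I x ∂(Measure.pi fun _ => μ.restrict (pvball p v)) =
      (p : ℂ) ^ (-(v : ℂ) * (eexp I s + 1)) *
        ∫ x, interaction s I x ∂(Measure.pi fun _ => μ.restrict (Zball p)) := by
  have hp0 : (p : ℂ) ≠ 0 := Nat.cast_ne_zero.2 hp.out.ne_zero
  rw [pi_restrict_pvball_finset, integral_smul_measure,
    integral_map (measurable_restrict_zpow_mul I v).aemeasurable
      (measurable_interactionOn s I).aestronglyMeasurable]
  simp only [interactionOn_restrict_zpow_mul, integral_const_mul]
  have hmass : ((((p : ℝ≥0∞) ^ (-v)) ^ I.card).toReal : ℂ) = (p : ℂ) ^ (-(v : ℂ) * I.card) := by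
    rw [Complex.cpow_mul_nat, ← Int.cast_neg, Complex.cpow_intCast]
    simp [toReal_natCast_zpow]
  rw [Complex.real_smul, hmass, ← mul_assoc, ← Complex.cpow_add _ _ hp0, eexp_eq_add_exponentSum]
  ring_nf

lemma ZI_pvball_eq_finsum (v : ℤ) {I : Finset (Fin N)} (hI : I.Nonempty)
    {s : Fin N → Fin N → ℂ} (h : InOmega I s) :
    ZI p μ (pvball p v) I s =
      ((p : ℂ) ^ (((v : ℂ) - 1) * (eexp I s + 1) + (I.card : ℂ)))⁻¹ *
        ∑ᶠ S ∈ {S : SplChain N I | S.Reduced}, ∏ B ∈ S.branches,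
          ((p - 1).descFactorial (S.degree B - 1) : ℂ) / ((p : ℂ) ^ eexp B s - 1) := by
  have hp0 : (p : ℂ) ≠ 0 := Nat.cast_ne_zero.2 hp.out.ne_zero
  refine (integral_interactionOn_pvball μ v I s).trans ?_
  rw [(digitSelfSimilar_restrict_Zball μ).integral_interaction_eq_finsum s h hI, ← mul_assoc,
    ← Complex.cpow_add _ _ hp0, ← Complex.cpow_neg, eexp_eq_add_exponentSum]
  ring_nf

end Balls

theorem statement_9 (p : ℕ) [Fact p.Prime] (N : ℕ) (hN : 2 ≤ N)
    (μ : Measure ℚ_[p]) [SigmaFinite μ] [μ.IsAddHaarMeasure] (hμ : μ (Zball p) = 1)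
    (v : ℤ) (I : Finset (Fin N)) (hI : I.Nonempty) (s : Fin N → Fin N → ℂ) :
    ((Integrable
        (fun x : ↥I → ℚ_[p] =>
          ∏ q ∈ Finset.univ.filter (fun q : (↥I) × (↥I) => (q.1 : Fin N) < (q.2 : Fin N)),
            (‖x q.1 - x q.2‖ : ℂ) ^ s q.1.1 q.2.1)
        (Measure.pi fun _ => μ.restrict (pvball p v)) ↔ InOmega I s) ∧
      (InOmega I s →
        ZI p μ (pvball p v) I s =
          ((p : ℂ) ^ (((v : ℂ) - 1) * (eexp I s + 1) + (I.card : ℂ)))⁻¹ *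
            ∑ᶠ S ∈ {S : SplChain N I | S.Reduced},
              ∏ lam ∈ S.branches,
                ((p - 1).descFactorial (S.degree lam - 1) : ℂ) /
                  ((p : ℂ) ^ eexp lam s - 1))) ∧
    ((Integrable
        (fun x : Fin N → ℚ_[p] => ∏ q ∈ pairs N, (‖x q.1 - x q.2‖ : ℂ) ^ s q.1 q.2)
        (Measure.pi fun _ => μ.restrict (Zball p)) ↔ InOmega Finset.univ s) ∧
      (InOmega Finset.univ s →
        ZNs p μ (Zball p) N s =
          (p : ℂ) ^ (∑ q ∈ pairs N, s q.1 q.2) *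
            ∑ᶠ S ∈ {S : SplChain N (Finset.univ : Finset (Fin N)) | S.Reduced},
              ∏ lam ∈ S.branches,
                ((p - 1).descFactorial (S.degree lam - 1) : ℂ) /
                  ((p : ℂ) ^ eexp lam s - 1))) := by
  have hprob : IsProbabilityMeasure (μ.restrict (Zball p)) :=
    ⟨by rw [Measure.restrict_apply_univ, hμ]⟩
  have hν : DigitSelfSimilar (μ.restrict (Zball p)) := digitSelfSimilar_restrict_Zball μ
  have huniv : (Finset.univ : Finset (Fin N)).Nonempty := ⟨⟨0, by lia⟩, Finset.mem_univ _⟩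
  refine ⟨⟨integrable_interactionOn_pvball_iff μ v I s, ZI_pvball_eq_finsum μ v hI⟩, ?_⟩
  rw [← pairsIn_univ]
  refine ⟨hν.integrable_interaction_iff_inOmega s Finset.univ, fun h => ?_⟩
  rw [ZNs, ← pairsIn_univ]
  exact hν.integral_interaction_eq_finsum s h huniv

end LogCoulomb
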